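/- Fix N ≥ 1, intrinsic frequencies ω_1,…,ω_N ∈ ℝ and a coupling strength κ with κ > 2·max_{1≤i≤N}|ω_i| (in particular κ > 0). Then for Lebesgue-almost every initial data (θ_1^0,…,θ_N^0) ∈ ℝ^N, the solution (θ_i)_{i=1}^N of the prototypical Winfree model satisfies: (a) for every i = 1,…,N the limit lim_{t→∞} θ_i(t) exists and lim_{t→∞} θ_i'(t) = 0; and (b) the limit R_∞ = lim_{t→∞} R(t) exists and R_∞ ≥ √(1/2 + √(1/4 − ‖Ω‖_∞²/κ²)). -/

import Mathlib

/-!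
The Winfree system is the gradient flow of `∑ ωᵢ θᵢ + (κ N / 2) R²`. Its vector field has
divergence at least `κ N R (1 - R)`: the Jacobian is a diagonal matrix with this trace plus a
positive semidefinite rank-one matrix. Hence the flow on the torus `(ℝ / 2πℤ)^N` expands volume
as long as `0 < R < 1`, and since the torus has finite volume the integral of `R (1 - R)` along
a trajectory tends to `+∞` only for a null set of initial data (`Winfree.ae_not_tendsto`). This
is proved without differentiating the flow: an explicit Euler step is an injective periodic map
with computable Jacobian, its iterates satisfy the volume bound
(`Winfree.lintegral_eulProd_le`), and Fatou's lemma transfers the bound to the flow as the step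
size tends to zero.

The rest of the argument concerns one trajectory whose integral of `R (1 - R)` does not diverge
(`Winfree.Sol.main`); put `r = 1 / √2`.

* If `R` reaches `1` then it stays above `r` afterwards (`Winfree.Sol.ordR_trap`). While `R > r`,
  an oscillator with `cos θᵢ(t₀) > -q` keeps `cos θᵢ ≥ min (cos θᵢ(t₀)) q`, so that every
  oscillator satisfies `cos θᵢ(t) ≥ cos θᵢ(t₀) - (1 - q)`. Averaging gives `R(t) ≥ q > r`, and
  a suitable `q` exists because `κ > 2 ‖Ω‖`.
* If `R ≥ r` eventually, then `κ R > ‖Ω‖` makes `θᵢ` cross points with `sin θᵢ = 1` only downwards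
  and points with `sin θᵢ = -1` only upwards, which confines every phase. The potential is then
  bounded, so all velocities tend to `0` by Barbalat's lemma. Thus
  `sin θᵢ - ωᵢ / (κ R) → 0`, and every value `y` that `R` takes at
  arbitrarily late times solves `y = N⁻¹ ∑ (1 + σᵢ √(1 - (ωᵢ / κ y)²))` with fixed signs `σᵢ`.
  By analyticity this cannot hold on an interval, so `R` converges, and so does each phase. If
  the limit of `R` were below `1`, the integral of `R (1 - R)` would diverge.
* Otherwise `R < 1` throughout and `R` falls below `r` at arbitrarily late times. Barbalat's lemma
  gives `R (1 - R) → 0`, whence `R → 0`. Then all `cos θᵢ → -1`, which forces all `ωᵢ = 0`, and in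
  that case `R` is nondecreasing, so `R(0) = 0`. Such initial data form a null set
  (`Winfree.ae_ordR_ne`).

Hence almost surely `R` converges to a limit at least `1`, and the claimed lower bound
`√(1/2 + √(1/4 - ‖Ω‖² / κ²))` is at most `1`.
-/

open MeasureTheory Filter

/-- The order parameter `R(t) = (1/N) ∑ⱼ (1 + cos θⱼ(t))` of the prototypical Winfree model. -/
noncomputable def orderParam (N : ℕ) (θ : Fin N → ℝ → ℝ) (t : ℝ) : ℝ :=
  (N : ℝ)⁻¹ * ∑ j, (1 + Real.cos (θ j t))

/-- `θ` is the solution of the prototypical Winfree model with frequencies `ω`,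
coupling strength `κ` and initial data `θ0`. -/
def IsWinfreeSol (N : ℕ) (ω : Fin N → ℝ) (κ : ℝ) (θ0 : Fin N → ℝ)
    (θ : Fin N → ℝ → ℝ) : Prop :=
  (∀ i, θ i 0 = θ0 i) ∧
  ∀ i, ∀ t : ℝ, 0 ≤ t →
    HasDerivAt (θ i)
      (ω i - κ / (N : ℝ) * (∑ j, (1 + Real.cos (θ j t))) * Real.sin (θ i t)) t

namespace Winfree

variable {N : ℕ}

/-! ### The vector field -/

/-- The order parameter as a function on phase space. -/
noncomputable def ordR (x : Fin N → ℝ) : ℝ := (N : ℝ)⁻¹ * ∑ j, (1 + Real.cos (x j))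

/-- The Winfree vector field on phase space. -/
noncomputable def vf (ω : Fin N → ℝ) (κ : ℝ) (x : Fin N → ℝ) (i : Fin N) : ℝ :=
  ω i - κ * ordR x * Real.sin (x i)

/-- `θ` solves the Winfree system for nonnegative times. -/
def Sol (ω : Fin N → ℝ) (κ : ℝ) (θ : ℝ → Fin N → ℝ) : Prop :=
  ∀ t, 0 ≤ t → ∀ i, HasDerivAt (fun s => θ s i) (vf ω κ (θ t) i) t

/-- The trace `-∑ κ R cos xᵢ = κ N R (1 - R)` of the diagonal part of the Jacobian of the
Winfree vector field. The Jacobian is this diagonal part plus a positive semidefinite matrix,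
so `growth` bounds the divergence from below. -/
noncomputable def growth (κ : ℝ) (x : Fin N → ℝ) : ℝ := κ * N * (ordR x * (1 - ordR x))

lemma ordR_nonneg (x : Fin N → ℝ) : 0 ≤ ordR x :=
  mul_nonneg (by positivity)
    (Finset.sum_nonneg fun j _ => by linarith [Real.neg_one_le_cos (x j)])

lemma inv_mul_sum_le (f : Fin N → ℝ) {c : ℝ} (hc : 0 ≤ c) (hf : ∀ i, f i ≤ c) :
    (N : ℝ)⁻¹ * ∑ j, f j ≤ c := by
  have h1 : ∑ j, f j ≤ N * c := by
    calc ∑ j, f j ≤ ∑ _j : Fin N, c := Finset.sum_le_sum fun j _ => hf j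
      _ = N * c := by simp
  rcases Nat.eq_zero_or_pos N with h | h
  · subst h; simpa using hc
  · have : (0 : ℝ) < N := by exact_mod_cast h
    rw [inv_mul_le_iff₀ this]; exact h1

lemma ordR_le_two (x : Fin N → ℝ) : ordR x ≤ 2 :=
  inv_mul_sum_le _ (by norm_num) fun j => by linarith [Real.cos_le_one (x j)]

lemma abs_cos_sub_cos_le (a b : ℝ) : |Real.cos a - Real.cos b| ≤ |a - b| := by
  have := Convex.norm_image_sub_le_of_norm_hasDerivWithin_le (f := Real.cos)
    (f' := fun x => -Real.sin x) (s := Set.univ) (x := b) (y := a) (C := 1)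
    (fun x _ => (Real.hasDerivAt_cos x).hasDerivWithinAt)
    (fun x _ => by simpa using Real.abs_sin_le_one x) convex_univ trivial trivial
  simpa using this

lemma abs_sin_sub_sin_le (a b : ℝ) : |Real.sin a - Real.sin b| ≤ |a - b| := by
  have := Convex.norm_image_sub_le_of_norm_hasDerivWithin_le (f := Real.sin)
    (f' := fun x => Real.cos x) (s := Set.univ) (x := b) (y := a) (C := 1)
    (fun x _ => (Real.hasDerivAt_sin x).hasDerivWithinAt)
    (fun x _ => by simpa using Real.abs_cos_le_one x) convex_univ trivial trivial
  simpa using this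

lemma abs_coord_le (x y : Fin N → ℝ) (i : Fin N) : |x i - y i| ≤ ‖x - y‖ := by
  simpa using norm_le_pi_norm (x - y) i

lemma ordR_lip (x y : Fin N → ℝ) : |ordR x - ordR y| ≤ ‖x - y‖ := by
  have h : ordR x - ordR y = (N : ℝ)⁻¹ * ∑ j, (Real.cos (x j) - Real.cos (y j)) := by
    simp only [ordR, Finset.sum_add_distrib, Finset.sum_sub_distrib]; ring
  rw [h, abs_mul, abs_of_nonneg (by positivity : (0 : ℝ) ≤ (N : ℝ)⁻¹)]
  refine le_trans (mul_le_mul_of_nonneg_left (Finset.abs_sum_le_sum_abs _ _) (by positivity)) ?_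
  exact inv_mul_sum_le _ (norm_nonneg _) fun j =>
    (abs_cos_sub_cos_le _ _).trans (abs_coord_le x y j)

lemma growth_lip {κ : ℝ} (hκ : 0 < κ) (x y : Fin N → ℝ) :
    |growth κ x - growth κ y| ≤ 3 * κ * N * ‖x - y‖ := by
  have h : growth κ x - growth κ y
      = κ * N * ((ordR x - ordR y) * (1 - ordR x - ordR y)) := by
    simp only [growth]; ring
  rw [h, abs_mul (κ * N), abs_mul (ordR x - ordR y),
    abs_of_nonneg (by positivity : 0 ≤ κ * (N : ℝ))]
  have h1 : |1 - ordR x - ordR y| ≤ 3 := by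
    rw [abs_le]
    constructor <;> linarith [ordR_nonneg x, ordR_nonneg y, ordR_le_two x, ordR_le_two y]
  calc κ * N * (|ordR x - ordR y| * |1 - ordR x - ordR y|)
      ≤ κ * N * (‖x - y‖ * 3) := by
        gcongr
        exact ordR_lip x y
    _ = _ := by ring

lemma vf_lip {ω : Fin N → ℝ} {κ : ℝ} (hκ : 0 < κ) (x y : Fin N → ℝ) (i : Fin N) :
    |vf ω κ x i - vf ω κ y i| ≤ 3 * κ * ‖x - y‖ := by
  have h : vf ω κ x i - vf ω κ y i
      = κ * ((ordR y - ordR x) * Real.sin (x i) + ordR y * (Real.sin (y i) - Real.sin (x i))) := by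
    simp only [vf]; ring
  rw [h, abs_mul, abs_of_pos hκ]
  have h1 : |(ordR y - ordR x) * Real.sin (x i)| ≤ ‖x - y‖ := by
    rw [abs_mul]
    calc _ ≤ ‖x - y‖ * 1 := by
          gcongr
          · rw [abs_sub_comm]; exact ordR_lip x y
          · exact Real.abs_sin_le_one _
      _ = _ := mul_one _
  have h2 : |ordR y * (Real.sin (y i) - Real.sin (x i))| ≤ 2 * ‖x - y‖ := by
    rw [abs_mul, abs_of_nonneg (ordR_nonneg y)]
    gcongr
    · exact ordR_le_two y
    · rw [abs_sub_comm]; exact (abs_sin_sub_sin_le _ _).trans (abs_coord_le x y i)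
  calc _ ≤ κ * (‖x - y‖ + 2 * ‖x - y‖) := by
        gcongr; exact (abs_add_le _ _).trans (add_le_add h1 h2)
    _ = _ := by ring

lemma vf_bound {ω : Fin N → ℝ} {κ : ℝ} (hκ : 0 < κ) (hω : ∀ i, |ω i| ≤ κ)
    (x : Fin N → ℝ) (i : Fin N) : |vf ω κ x i| ≤ 3 * κ := by
  have h2 : |κ * ordR x * Real.sin (x i)| ≤ κ * 2 * 1 := by
    rw [abs_mul, abs_mul, abs_of_pos hκ, abs_of_nonneg (ordR_nonneg x)]
    gcongr
    · exact ordR_le_two x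
    · exact Real.abs_sin_le_one _
  calc _ ≤ |ω i| + |κ * ordR x * Real.sin (x i)| := abs_sub _ _
    _ ≤ _ := by linarith [hω i]

lemma Sol.norm_sub_le {ω : Fin N → ℝ} {κ : ℝ} (hκ : 0 < κ) (hω : ∀ i, |ω i| ≤ κ)
    {θ : ℝ → Fin N → ℝ} (hθ : Sol ω κ θ) {s t : ℝ} (hs : 0 ≤ s) (ht : 0 ≤ t) :
    ‖θ t - θ s‖ ≤ 3 * κ * |t - s| := by
  rw [pi_norm_le_iff_of_nonneg (by positivity)]
  intro i
  exact Convex.norm_image_sub_le_of_norm_hasDerivWithin_le (f := fun u => θ u i)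
    (s := Set.Ici 0) (fun u hu => (hθ u hu i).hasDerivWithinAt)
    (fun u _ => vf_bound hκ hω (θ u) i) (convex_Ici 0) hs ht

/-! ### Euler scheme and expansion of volume -/

/-- One step of length `h` of the explicit Euler scheme. -/
noncomputable def eul (ω : Fin N → ℝ) (κ h : ℝ) (x : Fin N → ℝ) (i : Fin N) : ℝ :=
  x i + h * vf ω κ x i

/-- The determinant of the diagonal part of the Jacobian of an Euler step. -/
noncomputable def jac (κ h : ℝ) (x : Fin N → ℝ) : ℝ :=
  ∏ i, (1 - h * κ * ordR x * Real.cos (x i))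

lemma exp_neg_sub_sq_le {y : ℝ} (hy : |y| ≤ 1 / 2) : Real.exp (-y - y ^ 2) ≤ 1 - y := by
  obtain ⟨h1, h2⟩ := abs_le.mp hy
  have key : 1 ≤ (1 - y) * Real.exp (y + y ^ 2) := by
    rcases le_total y 0 with h | h
    · have := Real.add_one_le_exp (y + y ^ 2)
      have h3 : (1 - y) * (y + y ^ 2 + 1) ≤ (1 - y) * Real.exp (y + y ^ 2) := by
        gcongr; linarith
      nlinarith [mul_nonneg (neg_nonneg.2 h) (sq_nonneg y)]
    · have := Real.quadratic_le_exp_of_nonneg (x := y + y ^ 2) (by positivity)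
      have h3 : (1 - y) * (1 + (y + y ^ 2) + (y + y ^ 2) ^ 2 / 2)
          ≤ (1 - y) * Real.exp (y + y ^ 2) := by
        gcongr; linarith
      have h4 : (1 - y) * (1 + (y + y ^ 2) + (y + y ^ 2) ^ 2 / 2)
        = 1 + y ^ 2 / 2 * ((1 - y) * (1 + y) ^ 2 - 2 * y) := by ring
      have h5 : 0 ≤ (1 - y) * (1 + y) ^ 2 - 2 * y := by nlinarith [mul_nonneg h h]
      have : 0 ≤ y ^ 2 / 2 * ((1 - y) * (1 + y) ^ 2 - 2 * y) := by positivity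
      linarith
  have h6 : Real.exp (-y - y ^ 2) = (Real.exp (y + y ^ 2))⁻¹ := by
    rw [← Real.exp_neg]; congr 1; ring
  rw [h6, inv_le_iff_one_le_mul₀ (Real.exp_pos _)]
  exact key

lemma abs_jac_term_le {κ h : ℝ} (hκ : 0 < κ) (hh : 0 < h) (x : Fin N → ℝ) (i : Fin N) :
    |h * κ * ordR x * Real.cos (x i)| ≤ 2 * κ * h := by
  rw [abs_mul, abs_of_nonneg (mul_nonneg (by positivity) (ordR_nonneg x))]
  calc _ ≤ h * κ * 2 * 1 := by
        gcongr
        · exact ordR_le_two x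
        · exact Real.abs_cos_le_one _
    _ = _ := by ring

lemma sum_cos (hN : 1 ≤ N) (x : Fin N → ℝ) : ∑ i, Real.cos (x i) = N * (ordR x - 1) := by
  have : (N : ℝ) ≠ 0 := by positivity
  simp only [ordR, Finset.sum_add_distrib]
  field_simp
  simp

lemma exp_le_jac (hN : 1 ≤ N) {κ h : ℝ} (hκ : 0 < κ) (hh : 0 < h) (hs : 12 * κ * h ≤ 1)
    (x : Fin N → ℝ) :
    Real.exp (h * growth κ x - N * (2 * κ * h) ^ 2) ≤ jac κ h x := by
  have h1 : Real.exp (∑ i, (-(h * κ * ordR x * Real.cos (x i))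
      - (h * κ * ordR x * Real.cos (x i)) ^ 2)) ≤ jac κ h x := by
    rw [Real.exp_sum]
    refine Finset.prod_le_prod (fun i _ => (Real.exp_pos _).le) fun i _ => ?_
    exact exp_neg_sub_sq_le ((abs_jac_term_le hκ hh x i).trans (by linarith))
  refine le_trans (Real.exp_le_exp.2 ?_) h1
  rw [Finset.sum_sub_distrib, Finset.sum_neg_distrib, ← Finset.mul_sum, sum_cos hN]
  have h2 : ∑ i, (h * κ * ordR x * Real.cos (x i)) ^ 2 ≤ N * (2 * κ * h) ^ 2 := by
    calc _ ≤ ∑ _i : Fin N, (2 * κ * h) ^ 2 := Finset.sum_le_sum fun i _ => by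
          rw [← sq_abs]
          gcongr
          exact abs_jac_term_le hκ hh x i
      _ = _ := by simp
  simp only [growth]
  nlinarith

/-- The local error of the Euler scheme is quadratic in the step. -/
lemma Sol.eul_step {ω : Fin N → ℝ} {κ h : ℝ} (hκ : 0 < κ) (hω : ∀ i, |ω i| ≤ κ) (hh : 0 < h)
    {θ : ℝ → Fin N → ℝ} (hθ : Sol ω κ θ) {t : ℝ} (ht : 0 ≤ t) :
    ‖eul ω κ h (θ t) - θ (t + h)‖ ≤ (3 * κ * h) ^ 2 := by
  rw [norm_sub_rev, pi_norm_le_iff_of_nonneg (by positivity)]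
  intro i
  have := Convex.norm_image_sub_le_of_norm_hasDerivWithin_le
    (f := fun u => θ u i - u * vf ω κ (θ t) i)
    (f' := fun u => vf ω κ (θ u) i - 1 * vf ω κ (θ t) i) (C := 3 * κ * (3 * κ * h))
    (s := Set.Icc t (t + h)) (x := t) (y := t + h)
    (fun u hu => ((hθ u (ht.trans hu.1) i).sub
      ((hasDerivAt_id u).mul_const _)).hasDerivWithinAt)
    (fun u hu => by
      rw [one_mul, Real.norm_eq_abs]
      refine (vf_lip hκ _ _ _).trans ?_
      gcongr
      refine (hθ.norm_sub_le hκ hω ht (ht.trans hu.1)).trans ?_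
      rw [abs_of_nonneg (by linarith [hu.1])]
      gcongr
      linarith [hu.2])
    (convex_Icc _ _) ⟨le_rfl, by linarith⟩ ⟨by linarith, le_rfl⟩
  have e : (θ (t + h) - eul ω κ h (θ t)) i
      = θ (t + h) i - (t + h) * vf ω κ (θ t) i - (θ t i - t * vf ω κ (θ t) i) := by
    simp only [eul, Pi.sub_apply]; ring
  rw [e]
  refine this.trans (le_of_eq ?_)
  rw [add_sub_cancel_left, Real.norm_eq_abs, abs_of_pos hh]; ring

lemma eul_lip {ω : Fin N → ℝ} {κ h : ℝ} (hκ : 0 < κ) (hh : 0 < h) (x y : Fin N → ℝ) :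
    ‖eul ω κ h x - eul ω κ h y‖ ≤ (1 + 3 * κ * h) * ‖x - y‖ := by
  rw [pi_norm_le_iff_of_nonneg (by positivity)]
  intro i
  have e : (eul ω κ h x - eul ω κ h y) i = (x i - y i) + h * (vf ω κ x i - vf ω κ y i) := by
    simp only [eul, Pi.sub_apply]; ring
  rw [e, Real.norm_eq_abs]
  refine (abs_add_le _ _).trans ?_
  rw [abs_mul, abs_of_pos hh]
  have h1 := abs_coord_le x y i
  have h2 := mul_le_mul_of_nonneg_left (vf_lip (ω := ω) hκ x y i) hh.le
  linarith

lemma Sol.eul_iterate {ω : Fin N → ℝ} {κ h : ℝ} (hκ : 0 < κ) (hω : ∀ i, |ω i| ≤ κ)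
    (hh : 0 < h) {θ : ℝ → Fin N → ℝ} (hθ : Sol ω κ θ) (k : ℕ) :
    ‖(eul ω κ h)^[k] (θ 0) - θ (k * h)‖ ≤ 3 * κ * h * ((1 + 3 * κ * h) ^ k - 1) := by
  induction k with
  | zero => simp
  | succ k ih =>
    rw [Function.iterate_succ_apply']
    have h1 := hθ.eul_step hκ hω hh (t := k * h) (by positivity)
    have h2 := eul_lip (ω := ω) hκ hh ((eul ω κ h)^[k] (θ 0)) (θ (k * h))
    have h3 : ((k + 1 : ℕ) : ℝ) * h = k * h + h := by push_cast; ring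
    rw [h3]
    have h4 := norm_sub_le_norm_sub_add_norm_sub (eul ω κ h ((eul ω κ h)^[k] (θ 0)))
      (eul ω κ h (θ (k * h))) (θ (k * h + h))
    have h5 := mul_le_mul_of_nonneg_left ih (by positivity : 0 ≤ 1 + 3 * κ * h)
    rw [pow_succ]
    nlinarith

/-- The product of the lower bounds `jac` for the Jacobians along `m` Euler steps. -/
noncomputable def eulProd (ω : Fin N → ℝ) (κ h : ℝ) (m : ℕ) (x : Fin N → ℝ) : ℝ :=
  ∏ k ∈ Finset.range m, jac κ h ((eul ω κ h)^[k] x)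

/-- Along a solution, the Jacobian bound for the Euler scheme dominates `exp W` up to an error
that vanishes with the step, where `W` is the integral of `growth` along the solution. -/
lemma Sol.exp_le_eulProd (hN : 1 ≤ N) {ω : Fin N → ℝ} {κ h : ℝ} (hκ : 0 < κ)
    (hω : ∀ i, |ω i| ≤ κ) (hh : 0 < h) (hs : 12 * κ * h ≤ 1)
    {θ : ℝ → Fin N → ℝ} (hθ : Sol ω κ θ) {W : ℝ → ℝ}
    (hW : ∀ t, 0 ≤ t → HasDerivAt W (growth κ (θ t)) t) (hW0 : W 0 = 0)
    {t : ℝ} {m : ℕ} (hm : m * h = t) :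
    Real.exp (W t - t * h * (3 * κ * N * (3 * κ) * (1 + Real.exp (3 * κ * t)) + N * (2 * κ) ^ 2))
      ≤ eulProd ω κ h m (θ 0) := by
  have hstep : ∀ k < m, W ((k + 1 : ℕ) * h) - W (k * h)
      - h ^ 2 * (3 * κ * N * (3 * κ) * (1 + Real.exp (3 * κ * t)) + N * (2 * κ) ^ 2)
      ≤ h * growth κ ((eul ω κ h)^[k] (θ 0)) - N * (2 * κ * h) ^ 2 := by
    intro k hk
    have hk0 : (0 : ℝ) ≤ k * h := by positivity
    have h1 := Convex.norm_image_sub_le_of_norm_hasDerivWithin_le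
      (f := fun u => W u - u * growth κ (θ (k * h)))
      (f' := fun u => growth κ (θ u) - 1 * growth κ (θ (k * h)))
      (C := 3 * κ * N * (3 * κ * h))
      (s := Set.Icc (k * h) (k * h + h)) (x := k * h) (y := k * h + h)
      (fun u hu => ((hW u (hk0.trans hu.1)).sub
        ((hasDerivAt_id u).mul_const _)).hasDerivWithinAt)
      (fun u hu => by
        rw [one_mul, Real.norm_eq_abs]
        refine (growth_lip hκ _ _).trans ?_
        gcongr
        refine (hθ.norm_sub_le hκ hω hk0 (hk0.trans hu.1)).trans ?_
        rw [abs_of_nonneg (by linarith [hu.1])]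
        gcongr
        linarith [hu.2])
      (convex_Icc _ _) ⟨le_rfl, by linarith⟩ ⟨by linarith, le_rfl⟩
    rw [add_sub_cancel_left, Real.norm_eq_abs, Real.norm_eq_abs, abs_of_pos hh] at h1
    have h2 := hθ.eul_iterate hκ hω hh k
    have h3 : (1 + 3 * κ * h) ^ k ≤ Real.exp (3 * κ * t) := by
      calc (1 + 3 * κ * h) ^ k ≤ (Real.exp (3 * κ * h)) ^ k := by
            gcongr
            linarith [Real.add_one_le_exp (3 * κ * h)]
        _ = Real.exp (k * (3 * κ * h)) := by rw [← Real.exp_nat_mul]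
        _ ≤ _ := by
            rw [← hm]
            have : (k : ℝ) ≤ m := by exact_mod_cast hk.le
            refine Real.exp_le_exp.2 ?_
            nlinarith [mul_le_mul_of_nonneg_right this (by positivity : 0 ≤ 3 * κ * h)]
    have h4 : ‖(eul ω κ h)^[k] (θ 0) - θ (k * h)‖ ≤ 3 * κ * h * Real.exp (3 * κ * t) :=
      h2.trans (by gcongr; linarith)
    have h5 := (growth_lip hκ ((eul ω κ h)^[k] (θ 0)) (θ (k * h))).trans
      (mul_le_mul_of_nonneg_left h4 (by positivity))
    have h6 := mul_le_mul_of_nonneg_left (abs_le.1 h5).1 hh.le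
    have h7 := (abs_le.1 h1).2
    have h8 : ((k + 1 : ℕ) : ℝ) * h = k * h + h := by push_cast; ring
    rw [h8]
    nlinarith
  have hsum : W t - t * h * (3 * κ * N * (3 * κ) * (1 + Real.exp (3 * κ * t)) + N * (2 * κ) ^ 2)
      ≤ ∑ k ∈ Finset.range m, (h * growth κ ((eul ω κ h)^[k] (θ 0)) - N * (2 * κ * h) ^ 2) := by
    refine le_trans (le_of_eq ?_) (Finset.sum_le_sum fun k hk => hstep k (Finset.mem_range.1 hk))
    rw [Finset.sum_sub_distrib, Finset.sum_range_sub (fun k : ℕ => W (k * h))]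
    simp only [Finset.sum_const, Finset.card_range, nsmul_eq_mul, Nat.cast_zero, zero_mul, hW0, hm]
    rw [← hm]; ring
  refine (Real.exp_le_exp.2 hsum).trans ?_
  rw [Real.exp_sum]
  exact Finset.prod_le_prod (fun k _ => (Real.exp_pos _).le) fun k _ =>
    exp_le_jac hN hκ hh hs _

/-! ### Volume on the torus -/

open scoped Pointwise

lemma continuous_ordR : Continuous (ordR : (Fin N → ℝ) → ℝ) := by
  unfold ordR; fun_prop

lemma continuous_eul (ω : Fin N → ℝ) (κ h : ℝ) : Continuous (eul ω κ h) := by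
  have := continuous_ordR (N := N)
  refine continuous_pi fun i => ?_
  unfold eul vf
  fun_prop

lemma continuous_jac (κ h : ℝ) : Continuous (jac κ h : (Fin N → ℝ) → ℝ) := by
  have := continuous_ordR (N := N)
  unfold jac
  fun_prop

lemma continuous_eulProd (ω : Fin N → ℝ) (κ h : ℝ) (m : ℕ) : Continuous (eulProd ω κ h m) := by
  unfold eulProd
  exact continuous_finsetProd _ fun k _ =>
    (continuous_jac κ h).comp ((continuous_eul ω κ h).iterate k)

lemma jac_pos {κ h : ℝ} (hκ : 0 < κ) (hh : 0 < h) (hs : 12 * κ * h ≤ 1) (x : Fin N → ℝ) :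
    0 < jac κ h x :=
  Finset.prod_pos fun i _ => by
    linarith [(abs_le.1 (abs_jac_term_le hκ hh x i)).2]

/-- The Jacobian matrix of an Euler step. -/
noncomputable def eulMat (κ h : ℝ) (x : Fin N → ℝ) : Matrix (Fin N) (Fin N) ℝ :=
  Matrix.diagonal (fun i => 1 - h * κ * ordR x * Real.cos (x i)) +
    Matrix.replicateCol Unit (fun i => h * κ * (N : ℝ)⁻¹ * Real.sin (x i)) *
      Matrix.replicateRow Unit (fun i => Real.sin (x i))

/-- The rank-one part of the Jacobian is positive semidefinite, so it can only increase the
determinant. -/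
lemma jac_le_det {κ h : ℝ} (hκ : 0 < κ) (hh : 0 < h) (hs : 12 * κ * h ≤ 1) (x : Fin N → ℝ) :
    jac κ h x ≤ (eulMat κ h x).det := by
  have hpos : ∀ i, 0 < 1 - h * κ * ordR x * Real.cos (x i) := fun i => by
    linarith [(abs_le.1 (abs_jac_term_le hκ hh x i)).2]
  have hd : (Matrix.diagonal (fun i => 1 - h * κ * ordR x * Real.cos (x i))).det = jac κ h x :=
    Matrix.det_diagonal
  have hinv : (Matrix.diagonal (fun i => 1 - h * κ * ordR x * Real.cos (x i)))⁻¹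
      = Matrix.diagonal (fun i => (1 - h * κ * ordR x * Real.cos (x i))⁻¹) := by
    refine Matrix.inv_eq_right_inv ?_
    rw [Matrix.diagonal_mul_diagonal, ← Matrix.diagonal_one]
    congr 1
    funext i
    exact mul_inv_cancel₀ (hpos i).ne'
  rw [eulMat, Matrix.det_add_replicateCol_mul_replicateRow
    (by rw [hd]; exact (jac_pos hκ hh hs x).ne'.isUnit), hd, hinv]
  refine le_mul_of_one_le_right (jac_pos hκ hh hs x).le ?_
  rw [Matrix.det_unique]
  simp only [Matrix.add_apply, Matrix.one_apply_eq, Matrix.mul_apply, Matrix.replicateRow_apply,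
    Matrix.diagonal_apply, Matrix.replicateCol_apply, mul_ite, mul_zero, Finset.sum_ite_eq',
    Finset.mem_univ, if_true]
  refine le_add_of_nonneg_right (Finset.sum_nonneg fun i _ => ?_)
  have h1 := inv_nonneg.2 (hpos i).le
  have h2 : Real.sin (x i) * (1 - h * κ * ordR x * Real.cos (x i))⁻¹
      * (h * κ * (N : ℝ)⁻¹ * Real.sin (x i))
      = Real.sin (x i) ^ 2 * (1 - h * κ * ordR x * Real.cos (x i))⁻¹ * (h * κ * (N : ℝ)⁻¹) := by
    ring
  rw [h2]
  positivity

lemma hasFDerivAt_ordR (x : Fin N → ℝ) :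
    HasFDerivAt (ordR : (Fin N → ℝ) → ℝ)
      ((N : ℝ)⁻¹ • ∑ j, (-Real.sin (x j)) • ContinuousLinearMap.proj (R := ℝ) j) x := by
  have h : ∀ j ∈ Finset.univ, HasFDerivAt (fun x : Fin N → ℝ => 1 + Real.cos (x j))
      ((-Real.sin (x j)) • ContinuousLinearMap.proj (R := ℝ) (φ := fun _ : Fin N => ℝ) j) x :=
    fun j _ => ((hasFDerivAt_apply j x).cos).const_add 1
  exact (HasFDerivAt.fun_sum h).const_mul _

lemma hasFDerivAt_eul (ω : Fin N → ℝ) (κ h : ℝ) (x : Fin N → ℝ) :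
    HasFDerivAt (eul ω κ h) (LinearMap.toContinuousLinearMap (Matrix.toLin' (eulMat κ h x))) x := by
  rw [hasFDerivAt_pi']
  intro i
  have h1 := (hasFDerivAt_ordR x).const_mul κ
  have h2 := h1.mul (hasFDerivAt_apply (𝕜 := ℝ) i x).sin
  have h3 := (hasFDerivAt_apply (𝕜 := ℝ) i x).add ((h2.const_sub (ω i)).const_mul h)
  refine h3.congr_fderiv ?_
  ext v
  simp [eulMat, Matrix.toLin'_apply, Matrix.mulVec, dotProduct, Matrix.mul_apply,
    Matrix.diagonal_apply, mul_assoc, ← Finset.mul_sum]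
  ring

lemma eul_injective {ω : Fin N → ℝ} {κ h : ℝ} (hκ : 0 < κ) (hh : 0 < h) (hs : 12 * κ * h ≤ 1) :
    Function.Injective (eul ω κ h) := by
  intro x y hxy
  have h1 : ‖x - y‖ ≤ 3 * κ * h * ‖x - y‖ := by
    rw [pi_norm_le_iff_of_nonneg (by positivity)]
    intro i
    have h2 := congrFun hxy i
    simp only [eul] at h2
    have h3 : (x - y) i = h * (vf ω κ y i - vf ω κ x i) := by
      rw [Pi.sub_apply]; linarith
    rw [h3, Real.norm_eq_abs, abs_mul, abs_of_pos hh, abs_sub_comm]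
    have := mul_le_mul_of_nonneg_left (vf_lip (ω := ω) hκ x y i) hh.le
    linarith
  have h4 : ‖x - y‖ ≤ 0 := by nlinarith [norm_nonneg (x - y)]
  exact sub_eq_zero.1 (norm_le_zero_iff.1 h4)

/-- The basis `2π eᵢ` of the period lattice. -/
noncomputable def perBasis (N : ℕ) : Module.Basis (Fin N) ℝ (Fin N → ℝ) :=
  (Pi.basisFun ℝ (Fin N)).isUnitSMul (w := fun _ => 2 * Real.pi)
    fun _ => (Real.two_pi_pos.ne').isUnit

/-- The period lattice `(2πℤ)^N`. -/
abbrev Lat (N : ℕ) : AddSubgroup (Fin N → ℝ) :=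
  (Submodule.span ℤ (Set.range (perBasis N))).toAddSubgroup

/-- A fundamental cube of the torus `ℝ^N / (2πℤ)^N`. -/
noncomputable abbrev cube (N : ℕ) : Set (Fin N → ℝ) := ZSpan.fundamentalDomain (perBasis N)

lemma mem_lat {v : Fin N → ℝ} (hv : v ∈ Lat N) : ∃ n : Fin N → ℤ, ∀ i, v i = n i * (2 * Real.pi) := by
  rw [Submodule.mem_toAddSubgroup] at hv
  induction hv using Submodule.span_induction with
  | mem x hx =>
    obtain ⟨j, rfl⟩ := hx
    refine ⟨Pi.single j 1, fun i => ?_⟩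
    simp only [perBasis, Module.Basis.isUnitSMul_apply, Pi.basisFun_apply, Pi.smul_apply,
      smul_eq_mul]
    by_cases h : i = j
    · subst h; simp
    · simp [h]
  | zero => exact ⟨0, by simp⟩
  | add x y _ _ hx hy =>
    obtain ⟨a, ha⟩ := hx
    obtain ⟨b, hb⟩ := hy
    exact ⟨a + b, fun i => by simp [ha, hb]; ring⟩
  | smul c x _ hx =>
    obtain ⟨a, ha⟩ := hx
    exact ⟨c • a, fun i => by simp [ha]; ring⟩

instance : Countable (Lat N) := by
  choose n hn using fun v : Lat N => mem_lat v.2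
  refine Function.Injective.countable (f := n) fun v w hvw => Subtype.ext (funext fun i => ?_)
  rw [hn, hn, hvw]

lemma ordR_per {v : Fin N → ℝ} (hv : v ∈ Lat N) (x : Fin N → ℝ) : ordR (v + x) = ordR x := by
  obtain ⟨n, hn⟩ := mem_lat hv
  simp [ordR, hn, add_comm _ (x _), Real.cos_add_int_mul_two_pi]

lemma eul_per {ω : Fin N → ℝ} {κ h : ℝ} {v : Fin N → ℝ} (hv : v ∈ Lat N) (x : Fin N → ℝ) :
    eul ω κ h (v + x) = v + eul ω κ h x := by
  funext i
  obtain ⟨n, hn⟩ := mem_lat hv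
  simp only [eul, vf, ordR_per hv, Pi.add_apply]
  rw [hn, add_comm _ (x i), Real.sin_add_int_mul_two_pi]
  ring

lemma jac_per {κ h : ℝ} {v : Fin N → ℝ} (hv : v ∈ Lat N) (x : Fin N → ℝ) :
    jac κ h (v + x) = jac κ h x := by
  obtain ⟨n, hn⟩ := mem_lat hv
  simp only [jac, ordR_per hv, Pi.add_apply]
  simp [hn, add_comm _ (x _), Real.cos_add_int_mul_two_pi]

lemma eul_iterate_per {ω : Fin N → ℝ} {κ h : ℝ} {v : Fin N → ℝ} (hv : v ∈ Lat N) (k : ℕ)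
    (x : Fin N → ℝ) : (eul ω κ h)^[k] (v + x) = v + (eul ω κ h)^[k] x := by
  induction k generalizing x with
  | zero => rfl
  | succ k ih => rw [Function.iterate_succ_apply, Function.iterate_succ_apply, eul_per hv, ih]

lemma eulProd_per {ω : Fin N → ℝ} {κ h : ℝ} {v : Fin N → ℝ} (hv : v ∈ Lat N) (m : ℕ)
    (x : Fin N → ℝ) : eulProd ω κ h m (v + x) = eulProd ω κ h m x := by
  simp only [eulProd, eul_iterate_per hv, jac_per hv]

lemma measurableSet_eul_image (ω : Fin N → ℝ) {κ h : ℝ} (hκ : 0 < κ) (hh : 0 < h)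
    (hs : 12 * κ * h ≤ 1) : MeasurableSet (eul ω κ h '' cube N) :=
  (ZSpan.fundamentalDomain_measurableSet _).image_of_continuousOn_injOn
    (continuous_eul ω κ h).continuousOn (eul_injective hκ hh hs).injOn

/-- The Euler map is injective on the torus, so the image of a fundamental cube carries at most
the integral of a periodic function over the cube. -/
lemma lintegral_image_le {ω : Fin N → ℝ} {κ h : ℝ} (hκ : 0 < κ) (hh : 0 < h)
    (hs : 12 * κ * h ≤ 1) {g : (Fin N → ℝ) → ENNReal} (hg : Measurable g)
    (hper : ∀ v ∈ Lat N, ∀ x, g (v + x) = g x) :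
    ∫⁻ x in eul ω κ h '' cube N, g x ≤ ∫⁻ x in cube N, g x := by
  have hfd := ZSpan.isAddFundamentalDomain' (perBasis N) (volume : Measure (Fin N → ℝ))
  have hT := measurableSet_eul_image ω hκ hh hs
  have hQ : MeasurableSet (cube N) := ZSpan.fundamentalDomain_measurableSet _
  have hmeas : ∀ v : Lat N, MeasurableSet (v +ᵥ cube N) := fun v => hQ.const_vadd v
  -- Cut the image along translates of the cube and move each piece back to the cube.
  rw [hfd.setLIntegral_eq_tsum]
  have h1 : ∀ v : Lat N, ∫⁻ x in eul ω κ h '' cube N ∩ (v +ᵥ cube N), g x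
      = ∫⁻ x in ((fun x => (v : Fin N → ℝ) + x) ⁻¹' (eul ω κ h '' cube N)) ∩ cube N, g x := by
    intro v
    have hmp := measurePreserving_add_left (volume : Measure (Fin N → ℝ)) (v : Fin N → ℝ)
    rw [← hmp.setLIntegral_comp_preimage (hT.inter (hmeas v)) hg]
    simp only [hper _ v.2]
    congr 2
    ext x
    simp only [Set.mem_preimage, Set.mem_inter_iff]
    refine and_congr_right fun _ => ?_
    exact Set.vadd_mem_vadd_set_iff (a := v)
  simp only [h1]
  rw [← lintegral_iUnion]
  · exact lintegral_mono_set (Set.iUnion_subset fun v => Set.inter_subset_right)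
  · exact fun v => (hT.preimage (measurable_const_add _)).inter hQ
  · intro v w hvw
    refine Set.disjoint_left.2 ?_
    rintro x ⟨⟨a, ha, hax⟩, -⟩ ⟨⟨b, hb, hbx⟩, -⟩
    apply hvw
    have hax' : eul ω κ h a = v + x := hax
    have hbx' : eul ω κ h b = w + x := hbx
    have hab : (v - w : Lat N) + b = a := by
      apply eul_injective (ω := ω) hκ hh hs
      rw [eul_per (v - w : Lat N).2, hax', hbx']
      push_cast
      abel
    have h2 := ZSpan.exist_unique_vadd_mem_fundamentalDomain (perBasis N) b
    have h3 : (⟨_, (v - w : Lat N).2⟩ : Submodule.span ℤ (Set.range (perBasis N))) = 0 := by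
      refine h2.unique ?_ ?_
      · change (v - w : Lat N) + b ∈ cube N
        rw [hab]; exact ha
      · simpa using hb
    exact sub_eq_zero.1 (Subtype.ext (congrArg Subtype.val h3))

/-- Change of variables on the torus: the Jacobian bounds of iterated Euler steps have integral
at most the volume of the torus. -/
lemma lintegral_eulProd_le {ω : Fin N → ℝ} {κ h : ℝ} (hκ : 0 < κ) (hh : 0 < h)
    (hs : 12 * κ * h ≤ 1) (m : ℕ) :
    ∫⁻ x in cube N, ENNReal.ofReal (eulProd ω κ h m x) ≤ volume (cube N) := by
  induction m with
  | zero => simp [eulProd]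
  | succ m ih =>
    refine le_trans ?_ ih
    have hQ : MeasurableSet (cube N) := ZSpan.fundamentalDomain_measurableSet _
    have hmeas : Measurable fun x => ENNReal.ofReal (eulProd ω κ h m x) :=
      (continuous_eulProd ω κ h m).measurable.ennreal_ofReal
    refine le_trans ?_ (lintegral_image_le (ω := ω) hκ hh hs hmeas
      fun v hv x => by rw [eulProd_per hv])
    rw [lintegral_image_eq_lintegral_abs_det_fderiv_mul volume hQ
      (fun x _ => (hasFDerivAt_eul ω κ h x).hasFDerivWithinAt) (eul_injective hκ hh hs).injOn]
    refine lintegral_mono fun x => ?_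
    have h1 : eulProd ω κ h (m + 1) x = jac κ h x * eulProd ω κ h m (eul ω κ h x) := by
      simp only [eulProd, Finset.prod_range_succ', Function.iterate_succ_apply,
        Function.iterate_zero, id]
      exact mul_comm _ _
    rw [h1, ENNReal.ofReal_mul (jac_pos hκ hh hs x).le]
    gcongr
    refine le_trans (jac_le_det hκ hh hs x) (le_trans (le_abs_self _) (le_of_eq ?_))
    simp [ContinuousLinearMap.det]

/-- For almost every initial point, the integral of `growth` along the solution does not tend
to infinity: otherwise the flow would expand a set of positive measure beyond the volume of the
torus. -/
lemma ae_not_tendsto (hN : 1 ≤ N) {ω : Fin N → ℝ} {κ : ℝ} (hκ : 0 < κ) (hω : ∀ i, |ω i| ≤ κ) :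
    ∀ᵐ x : Fin N → ℝ, ∀ θ : ℝ → Fin N → ℝ, θ 0 = x → Sol ω κ θ →
      ∀ W : ℝ → ℝ, (∀ t, 0 ≤ t → HasDerivAt W (growth κ (θ t)) t) → W 0 = 0 →
        ¬ Tendsto W atTop atTop := by
  obtain ⟨n₀, hn₀⟩ := exists_nat_gt (12 * κ)
  -- Step sizes `1 / (n + n₀)` are admissible and divide every natural time.
  set h : ℕ → ℝ := fun n => ((n + n₀ : ℕ) : ℝ)⁻¹ with hdef
  have hn₀' : (0 : ℝ) < n₀ := lt_trans (by positivity) hn₀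
  have hpos' : ∀ n : ℕ, (0 : ℝ) < ((n + n₀ : ℕ) : ℝ) := fun n => by push_cast; positivity
  have hpos : ∀ n, 0 < h n := fun n => inv_pos.2 (hpos' n)
  have hsm : ∀ n, 12 * κ * h n ≤ 1 := fun n => by
    rw [hdef]
    simp only
    rw [← div_eq_mul_inv, div_le_one (hpos' n)]
    push_cast
    linarith [(Nat.cast_nonneg n : (0 : ℝ) ≤ n)]
  set P : ℕ → ℕ → (Fin N → ℝ) → ENNReal := fun t n x =>
    ENNReal.ofReal (eulProd ω κ (h n) ((n + n₀) * t) x) with hP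
  set Ψ : (Fin N → ℝ) → ENNReal := fun x =>
    liminf (fun t : ℕ => liminf (fun n : ℕ => P t n x) atTop) atTop with hΨ
  have hPm : ∀ t n, Measurable (P t n) := fun t n =>
    (continuous_eulProd _ _ _ _).measurable.ennreal_ofReal
  have hm1 : ∀ t, Measurable fun x => liminf (fun n : ℕ => P t n x) atTop := fun t =>
    Measurable.liminf (hPm t)
  have hΨm : Measurable Ψ := Measurable.liminf hm1
  have hvol : volume (cube N) ≠ ⊤ :=
    (ZSpan.fundamentalDomain_isBounded (perBasis N)).measure_lt_top.ne
  have hint : ∫⁻ x in cube N, Ψ x ≤ volume (cube N) := by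
    refine (lintegral_liminf_le hm1).trans ?_
    refine liminf_le_of_le (by isBoundedDefault) fun b hb => ?_
    obtain ⟨t, ht⟩ := hb.exists
    refine ht.trans ((lintegral_liminf_le (hPm t)).trans ?_)
    refine liminf_le_of_le (by isBoundedDefault) fun b hb => ?_
    obtain ⟨n, hn⟩ := hb.exists
    exact hn.trans (lintegral_eulProd_le hκ (hpos n) (hsm n) _)
  have hΨper : ∀ v ∈ Lat N, ∀ x, Ψ (v + x) = Ψ x := fun v hv x => by
    simp only [hΨ, hP, eulProd_per hv]
  have hae : ∀ᵐ x : Fin N → ℝ, Ψ x ≠ ⊤ := by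
    have h1 : volume ({x | Ψ x = ⊤} ∩ cube N) = 0 := by
      have := ae_lt_top hΨm (ne_top_of_le_ne_top hvol hint)
      rw [ae_iff, Measure.restrict_apply' (ZSpan.fundamentalDomain_measurableSet _)] at this
      simpa using this
    have hfd := ZSpan.isAddFundamentalDomain' (perBasis N) (volume : Measure (Fin N → ℝ))
    have h2 := hfd.measure_zero_of_invariant {x | Ψ x = ⊤} (fun v => ?_) h1
    · rw [ae_iff]; simpa using h2
    · ext x
      rw [Set.mem_vadd_set_iff_neg_vadd_mem]
      change Ψ ((-v : Lat N) + x) = ⊤ ↔ Ψ x = ⊤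
      rw [hΨper _ (-v : Lat N).2]
  filter_upwards [hae] with x hx θ hθ0 hθ W hW hW0 htend
  apply hx
  have hlow : ∀ t : ℕ, ENNReal.ofReal (Real.exp (W t)) ≤ liminf (fun n : ℕ => P t n x) atTop := by
    intro t
    set C := 3 * κ * N * (3 * κ) * (1 + Real.exp (3 * κ * t)) + N * (2 * κ) ^ 2
    have h0 : Tendsto h atTop (nhds 0) :=
      (tendsto_natCast_atTop_atTop.comp (tendsto_add_atTop_nat n₀)).inv_tendsto_atTop
    have hlim : Tendsto (fun n => ENNReal.ofReal (Real.exp (W t - t * h n * C))) atTop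
        (nhds (ENNReal.ofReal (Real.exp (W t)))) := by
      refine (ENNReal.continuous_ofReal.comp Real.continuous_exp).continuousAt.tendsto.comp ?_
      have := ((h0.const_mul (t : ℝ)).mul_const C).const_sub (W t)
      simpa using this
    rw [← hlim.liminf_eq]
    refine liminf_le_liminf (Eventually.of_forall fun n => ?_)
    refine ENNReal.ofReal_le_ofReal ?_
    rw [← hθ0]
    refine hθ.exp_le_eulProd hN hκ hω (hpos n) (hsm n) hW hW0 ?_
    rw [hdef]
    push_cast
    have := hpos' n
    push_cast at this
    field_simp
  have hlim : Tendsto (fun t : ℕ => ENNReal.ofReal (Real.exp (W t))) atTop (nhds ⊤) :=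
    ENNReal.tendsto_ofReal_atTop.comp (Real.tendsto_exp_atTop.comp
      (htend.comp tendsto_natCast_atTop_atTop))
  rw [eq_top_iff, ← hlim.liminf_eq]
  exact liminf_le_liminf (Eventually.of_forall hlow)

/-! ### Convergence criteria for real functions -/

/-- A bounded continuous function converges as soon as every open interval contains a value that
it eventually avoids. -/
lemma exists_lim {u : ℝ → ℝ} {T B : ℝ} (hc : ContinuousOn u (Set.Ici T))
    (hB : ∀ t, T ≤ t → |u t| ≤ B)
    (h : ∀ a b, a < b → ∃ y ∈ Set.Ioo a b, ¬ ∃ᶠ t in atTop, u t = y) :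
    ∃ c, Tendsto u atTop (nhds c) := by
  have hev : ∀ᶠ t in atTop, |u t| ≤ B := (eventually_ge_atTop T).mono hB
  refine tendsto_of_no_upcrossings dense_univ (fun a _ b _ hab => ?_)
    ⟨B, hev.mono fun t ht => (abs_le.1 ht).2⟩ ⟨-B, hev.mono fun t ht => (abs_le.1 ht).1⟩
  rintro ⟨hfa, hfb⟩
  obtain ⟨y, hy, hny⟩ := h a b hab
  refine hny (frequently_atTop.2 fun M => ?_)
  obtain ⟨t₁, ht₁, hu₁⟩ := frequently_atTop.1 hfa (max M T)
  obtain ⟨t₂, ht₂, hu₂⟩ := frequently_atTop.1 hfb t₁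
  have hsub : Set.Icc t₁ t₂ ⊆ Set.Ici T := fun s hs =>
    (le_max_right _ _).trans (ht₁.trans hs.1)
  obtain ⟨s, hs, hus⟩ := intermediate_value_Icc ht₂ (hc.mono hsub)
    ⟨(hu₁.trans hy.1).le, (hy.2.trans hu₂).le⟩
  exact ⟨s, (le_max_left _ _).trans (ht₁.trans hs.1), hus⟩

/-- A form of Barbalat's lemma: a nonnegative Lipschitz function whose primitive does not tend to
infinity tends to zero. -/
lemma barbalat {V g : ℝ → ℝ} {T K : ℝ} (hV : ∀ t, T ≤ t → HasDerivAt V (g t) t)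
    (hg : ∀ t, T ≤ t → 0 ≤ g t) (hK : 0 < K)
    (hlip : ∀ s t, T ≤ s → T ≤ t → |g t - g s| ≤ K * |t - s|)
    (hnot : ¬ Tendsto V atTop atTop) : Tendsto g atTop (nhds 0) := by
  have hmono : Monotone fun t => V (max t T) := by
    have h1 : MonotoneOn V (Set.Ici T) := by
      refine monotoneOn_of_deriv_nonneg (convex_Ici T)
        (fun t ht => (hV t ht).continuousAt.continuousWithinAt)
        (fun t ht => (hV t (interior_subset ht)).differentiableAt.differentiableWithinAt)
        (fun t ht => ?_)
      rw [(hV t (interior_subset ht)).deriv]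
      exact hg t (interior_subset ht)
    exact fun s t hst => h1 (Set.mem_Ici.2 (le_max_right _ _)) (Set.mem_Ici.2 (le_max_right _ _))
      (max_le_max_right T hst)
  have heq : (fun t => V (max t T)) =ᶠ[atTop] V :=
    (eventually_ge_atTop T).mono fun t ht => by simp [max_eq_left ht]
  obtain ⟨l, hl⟩ : ∃ l, Tendsto V atTop (nhds l) := by
    rcases tendsto_atTop_of_monotone hmono with h | ⟨l, hl⟩
    · exact absurd (h.congr' heq) hnot
    · exact ⟨l, hl.congr' heq⟩
  rw [Metric.tendsto_nhds]
  intro ε hε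
  set δ := ε / (2 * K) with hδ
  have hδ0 : 0 < δ := by positivity
  have h1 : Tendsto (fun t => V (t + δ) - V t) atTop (nhds 0) := by
    simpa using (hl.comp (tendsto_atTop_add_const_right _ δ tendsto_id)).sub hl
  have h2 : ∀ᶠ t in atTop, V (t + δ) - V t < ε / 2 * δ :=
    h1.eventually (gt_mem_nhds (by positivity))
  filter_upwards [h2, eventually_ge_atTop T] with t ht hT
  obtain ⟨ξ, hξ, he⟩ := exists_hasDerivAt_eq_slope V g (show t < t + δ by linarith)
    (fun s hs => (hV s (hT.trans hs.1)).continuousAt.continuousWithinAt)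
    (fun s hs => hV s (hT.trans hs.1.le))
  have h3 : g ξ < ε / 2 := by
    rw [he, add_sub_cancel_left, div_lt_iff₀ hδ0]; exact ht
  have h4 := (abs_le.1 (hlip ξ t (hT.trans hξ.1.le) hT)).2
  have h5 : K * |t - ξ| ≤ ε / 2 := by
    have : |t - ξ| ≤ δ := by rw [abs_le]; constructor <;> linarith [hξ.1, hξ.2]
    calc K * |t - ξ| ≤ K * δ := by gcongr
      _ = ε / 2 := by rw [hδ]; field_simp
  rw [Real.dist_eq, sub_zero, abs_of_nonneg (hg t hT)]
  linarith

/-- If a function and its derivative both converge, the derivative tends to zero. -/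
lemma eq_zero_of_tendsto_deriv {f f' : ℝ → ℝ} {T L c : ℝ}
    (hf : ∀ t, T ≤ t → HasDerivAt f (f' t) t) (hL : Tendsto f atTop (nhds L))
    (hc : Tendsto f' atTop (nhds c)) : c = 0 := by
  have h1 : ∀ t, ∃ ξ, t ≤ ξ ∧ (T ≤ t → f' ξ = f (t + 1) - f t) := by
    intro t
    by_cases ht : T ≤ t
    · obtain ⟨ξ, hξ, he⟩ := exists_hasDerivAt_eq_slope f f' (show t < t + 1 by linarith)
        (fun s hs => (hf s (ht.trans hs.1)).continuousAt.continuousWithinAt)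
        (fun s hs => hf s (ht.trans hs.1.le))
      exact ⟨ξ, hξ.1.le, fun _ => by rw [he]; simp⟩
    · exact ⟨t, le_rfl, fun h => absurd h ht⟩
  choose ξ hξ he using h1
  have h2 : Tendsto (fun t => f' (ξ t)) atTop (nhds c) :=
    hc.comp (tendsto_atTop_mono hξ tendsto_id)
  have h3 : Tendsto (fun t => f (t + 1) - f t) atTop (nhds 0) := by
    simpa using (hL.comp (tendsto_atTop_add_const_right _ 1 tendsto_id)).sub hL
  exact tendsto_nhds_unique (h2.congr' ((eventually_ge_atTop T).mono he)) h3

lemma exists_sin_ne {a b : ℝ} (hab : a < b) (s : ℝ) : ∃ y ∈ Set.Ioo a b, Real.sin y ≠ s := by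
  by_contra! h
  have hc : ∀ y ∈ Set.Ioo a b, Real.cos y = 0 := fun y hy => by
    have h1 : Real.sin =ᶠ[nhds y] fun _ => s :=
      Filter.eventually_of_mem (Ioo_mem_nhds hy.1 hy.2) h
    simpa using h1.deriv_eq
  have hm : (a + b) / 2 ∈ Set.Ioo a b := ⟨by linarith, by linarith⟩
  have h2 : Real.cos =ᶠ[nhds ((a + b) / 2)] fun _ => 0 :=
    Filter.eventually_of_mem (Ioo_mem_nhds hm.1 hm.2) hc
  have h3 : Real.sin ((a + b) / 2) = 0 := by simpa using h2.deriv_eq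
  have := Real.sin_sq_add_cos_sq ((a + b) / 2)
  rw [h3, hc _ hm] at this
  norm_num at this

/-- Values taken at arbitrarily late times are compatible with asymptotic relations. -/
lemma eq_of_frequently {u f : ℝ → ℝ} {g : ℝ → ℝ} {y c : ℝ} (hf : ∀ᶠ t in atTop, f t = g (u t))
    (hc : Tendsto f atTop (nhds c)) (hy : ∃ᶠ t in atTop, u t = y) : g y = c := by
  have hne : (atTop ⊓ 𝓟 {t | u t = y}).NeBot := frequently_mem_iff_neBot.1 hy
  have h1 : Tendsto f (atTop ⊓ 𝓟 {t | u t = y}) (nhds c) := hc.mono_left inf_le_left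
  refine tendsto_nhds_unique (tendsto_const_nhds.congr' ?_) h1
  filter_upwards [hf.filter_mono inf_le_left, mem_inf_of_right (mem_principal_self _)] with t h2 h3
  rw [h2, h3]

/-- A function that increases wherever it equals `c` does not fall below `c`. -/
lemma le_of_barrier {f f' : ℝ → ℝ} {a b c : ℝ} (hab : a ≤ b)
    (hf : ∀ x ∈ Set.Icc a b, HasDerivAt f (f' x) x) (h0 : c ≤ f a)
    (hb : ∀ x ∈ Set.Ico a b, f x = c → 0 < f' x) : c ≤ f b := by
  have := image_le_of_deriv_right_lt_deriv_boundary (f := fun x => -f x) (f' := fun x => -f' x)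
    (a := a) (b := b) (B := fun _ => -c) (B' := fun _ => 0)
    (fun x hx => (hf x hx).neg.continuousAt.continuousWithinAt)
    (fun x hx => (hf x ⟨hx.1, hx.2.le⟩).neg.hasDerivWithinAt)
    (neg_le_neg h0) (fun x => hasDerivAt_const x _)
    (fun x hx he => by linarith [hb x hx (neg_injective he)]) ⟨hab, le_rfl⟩
  linarith

/-! ### Trapping -/

section Dynamics

variable {ω : Fin N → ℝ} {κ : ℝ} {θ : ℝ → Fin N → ℝ}

lemma Sol.cos_deriv (hθ : Sol ω κ θ) {t : ℝ} (ht : 0 ≤ t) (i : Fin N) :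
    HasDerivAt (fun s => Real.cos (θ s i)) (-Real.sin (θ t i) * vf ω κ (θ t) i) t :=
  (hθ t ht i).cos

lemma Sol.sin_deriv (hθ : Sol ω κ θ) {t : ℝ} (ht : 0 ≤ t) (i : Fin N) :
    HasDerivAt (fun s => Real.sin (θ s i)) (Real.cos (θ t i) * vf ω κ (θ t) i) t :=
  (hθ t ht i).sin

lemma Sol.ordR_deriv (hθ : Sol ω κ θ) {t : ℝ} (ht : 0 ≤ t) :
    HasDerivAt (fun s => ordR (θ s))
      ((N : ℝ)⁻¹ * ∑ i, -Real.sin (θ t i) * vf ω κ (θ t) i) t :=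
  (HasDerivAt.fun_sum fun i _ => (hθ.cos_deriv ht i).const_add 1).const_mul _

lemma Sol.continuousOn_ordR (hθ : Sol ω κ θ) {T : ℝ} (hT : 0 ≤ T) :
    ContinuousOn (fun s => ordR (θ s)) (Set.Ici T) := fun _ ht =>
  (hθ.ordR_deriv (hT.trans ht)).continuousAt.continuousWithinAt

/-- While the order parameter exceeds `r`, an oscillator starting with `cos θᵢ > -q` cannot lower
its cosine below the smaller of its initial value and `q`: where `|cos θᵢ| ≤ q`, the coupling
dominates `ωᵢ`. For the other oscillators the bound is trivial. -/
lemma Sol.cos_ge (hκ : 0 < κ) {Ωn r q : ℝ} (hω : ∀ i, |ω i| ≤ Ωn) (hr : 0 < r)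
    (hq : 0 < q) (hq1 : q < 1) (hrq : Ωn ^ 2 < κ ^ 2 * r ^ 2 * (1 - q ^ 2)) (hθ : Sol ω κ θ)
    {t₀ t : ℝ} (ht₀ : 0 ≤ t₀) (ht : t₀ ≤ t) (hR : ∀ s ∈ Set.Ico t₀ t, r < ordR (θ s))
    (i : Fin N) : q - 1 + Real.cos (θ t₀ i) ≤ Real.cos (θ t i) := by
  rcases le_or_gt (Real.cos (θ t₀ i)) (-q) with h | h
  · linarith [Real.neg_one_le_cos (θ t i)]
  · have hm : min (Real.cos (θ t₀ i)) q ≤ Real.cos (θ t i) := by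
      refine le_of_barrier (f := fun s => Real.cos (θ s i)) ht
        (fun s hs => hθ.cos_deriv (ht₀.trans hs.1) i) (min_le_left _ _) ?_
      intro s hs hcs
      have hc1 : Real.cos (θ s i) ≤ q := hcs ▸ min_le_right _ _
      have hc2 : -q ≤ Real.cos (θ s i) := hcs ▸ le_min h.le (by linarith)
      have hsq : 1 - q ^ 2 ≤ Real.sin (θ s i) ^ 2 := by
        rw [Real.sin_sq]; nlinarith
      have hRs := hR s hs
      set S := Real.sin (θ s i) with hS
      have h1 : Ωn ^ 2 < (κ * r * |S|) ^ 2 := by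
        rw [mul_pow, mul_pow, sq_abs]
        exact hrq.trans_le (by gcongr)
      have h2 : |ω i| < κ * r * |S| := (hω i).trans_lt (lt_of_pow_lt_pow_left₀ 2 (by positivity) h1)
      have hS0 : 0 < |S| := by
        rw [abs_pos]; intro h0
        rw [h0] at hsq
        nlinarith
      have h3 : κ * r * |S| ≤ κ * ordR (θ s) * |S| := by gcongr
      have h4 : -S * vf ω κ (θ s) i = κ * ordR (θ s) * |S| * |S| - ω i * S := by
        simp only [vf, ← hS]
        have := abs_mul_abs_self S
        linear_combination (-κ * ordR (θ s)) * this
      have h5 : ω i * S ≤ |ω i| * |S| := by rw [← abs_mul]; exact le_abs_self _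
      rw [h4]
      nlinarith [mul_lt_mul_of_pos_right (h2.trans_le h3) hS0]
    refine le_trans (le_min ?_ ?_) hm
    · linarith
    · linarith [Real.cos_le_one (θ t₀ i)]

lemma Sol.ordR_ge (hN : 1 ≤ N) (hκ : 0 < κ) {Ωn r q : ℝ} (hω : ∀ i, |ω i| ≤ Ωn) (hr : 0 < r)
    (hq : 0 < q) (hq1 : q < 1) (hrq : Ωn ^ 2 < κ ^ 2 * r ^ 2 * (1 - q ^ 2)) (hθ : Sol ω κ θ)
    {t₀ t : ℝ} (ht₀ : 0 ≤ t₀) (ht : t₀ ≤ t) (hR : ∀ s ∈ Set.Ico t₀ t, r < ordR (θ s)) :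
    q - 1 + ordR (θ t₀) ≤ ordR (θ t) := by
  have h1 := Finset.sum_le_sum fun (i : Fin N) (_ : i ∈ Finset.univ) =>
    hθ.cos_ge hκ hω hr hq hq1 hrq ht₀ ht hR i
  have hN' : (0 : ℝ) < N := by exact_mod_cast hN
  rw [Finset.sum_add_distrib, sum_cos hN, sum_cos hN] at h1
  simp only [Finset.sum_const, Finset.card_univ, Fintype.card_fin, nsmul_eq_mul] at h1
  nlinarith

/-- Once the order parameter reaches `1`, it stays above `r`. -/
lemma Sol.ordR_trap (hN : 1 ≤ N) (hκ : 0 < κ) {Ωn r q : ℝ} (hω : ∀ i, |ω i| ≤ Ωn) (hr : 0 < r)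
    (hrq' : r < q) (hq1 : q < 1) (hrq : Ωn ^ 2 < κ ^ 2 * r ^ 2 * (1 - q ^ 2)) (hθ : Sol ω κ θ)
    {t₀ : ℝ} (ht₀ : 0 ≤ t₀) (h1 : 1 ≤ ordR (θ t₀)) :
    ∀ t, t₀ ≤ t → r < ordR (θ t) := by
  intro t ht
  by_contra! hcon
  -- Consider the first time at which the order parameter is at most `r`.
  have hcont : ContinuousOn (fun s => ordR (θ s)) (Set.Icc t₀ t) :=
    (hθ.continuousOn_ordR ht₀).mono fun s hs => hs.1
  have hcomp : IsCompact (Set.Icc t₀ t ∩ (fun s => ordR (θ s)) ⁻¹' Set.Iic r) :=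
    isCompact_Icc.of_isClosed_subset
      (hcont.preimage_isClosed_of_isClosed isClosed_Icc isClosed_Iic) Set.inter_subset_left
  obtain ⟨s, ⟨hs, hsr⟩, hmin⟩ := hcomp.exists_isLeast ⟨t, ⟨ht, le_rfl⟩, hcon⟩
  have h2 := hθ.ordR_ge hN hκ hω hr (hr.trans hrq') hq1 hrq ht₀ hs.1 fun u hu => by
    by_contra! hu'
    exact absurd (hmin ⟨⟨hu.1, hu.2.le.trans hs.2⟩, hu'⟩) (not_le.2 hu.2)
  have h3 : ordR (θ s) ≤ r := hsr
  linarith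

/-- Where `κ R > |ωᵢ|`, the phase `θᵢ` decreases through `π/2` and increases through `-π/2`, up to
multiples of `2π`, so these points confine it. -/
lemma Sol.bounded (hκ : 0 < κ) {Ωn r T : ℝ} (hω : ∀ i, |ω i| ≤ Ωn) (hr : Ωn < κ * r)
    (hθ : Sol ω κ θ) (hT : 0 ≤ T) (hR : ∀ t, T ≤ t → r ≤ ordR (θ t)) (i : Fin N) :
    ∃ B, ∀ t, T ≤ t → |θ t i| ≤ B := by
  have hbig : ∀ t, T ≤ t → |ω i| < κ * ordR (θ t) := fun t ht =>
    (hω i).trans_lt (hr.trans_le (by gcongr; exact hR t ht))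
  obtain ⟨n, hn⟩ := exists_nat_gt (|θ T i| / (2 * Real.pi))
  rw [div_lt_iff₀ Real.two_pi_pos] at hn
  obtain ⟨hn1, hn2⟩ := abs_lt.1 hn
  have hpi := Real.pi_pos
  refine ⟨Real.pi / 2 + n * (2 * Real.pi), fun t ht => abs_le.2 ⟨?_, ?_⟩⟩
  · refine le_of_barrier (f := fun s => θ s i) ht (fun s hs => hθ s (hT.trans hs.1) i)
      (by linarith) ?_
    intro s hs he
    have h1 : Real.sin (θ s i) = -1 := by
      have he' : θ s i = -(Real.pi / 2 + n * (2 * Real.pi)) := he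
      rw [he', Real.sin_neg, Real.sin_add_nat_mul_two_pi, Real.sin_pi_div_two]
    have h2 := abs_lt.1 (hbig s hs.1)
    simp only [vf, h1]
    linarith [h2.1]
  · have := le_of_barrier (f := fun s => -θ s i) (c := -(Real.pi / 2 + n * (2 * Real.pi))) ht
      (fun s hs => (hθ s (hT.trans hs.1) i).neg) (by linarith) ?_
    · linarith
    intro s hs he
    have h1 : Real.sin (θ s i) = 1 := by
      have he' : θ s i = Real.pi / 2 + n * (2 * Real.pi) := neg_injective he
      rw [he', Real.sin_add_nat_mul_two_pi, Real.sin_pi_div_two]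
    have h2 := abs_lt.1 (hbig s hs.1)
    simp only [vf, h1]
    linarith [h2.2]

/-- The system is the gradient flow of `∑ ωᵢ θᵢ + (κ N / 2) R²`, so on a bounded trajectory all
velocities tend to zero. -/
lemma Sol.vf_tendsto (hN : 1 ≤ N) (hκ : 0 < κ) (hω : ∀ i, |ω i| ≤ κ) (hθ : Sol ω κ θ) {T : ℝ}
    (hT : 0 ≤ T) (hb : ∀ i, ∃ B, ∀ t, T ≤ t → |θ t i| ≤ B) (i : Fin N) :
    Tendsto (fun t => vf ω κ (θ t) i) atTop (nhds 0) := by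
  have hN' : (0 : ℝ) < N := by exact_mod_cast hN
  choose B hB using hb
  have hderiv : ∀ t, T ≤ t → HasDerivAt
      (fun s => ∑ i, ω i * θ s i + κ * N / 2 * ordR (θ s) ^ 2)
      (∑ i, vf ω κ (θ t) i ^ 2) t := by
    intro t ht
    have ht0 := hT.trans ht
    have h1 := HasDerivAt.fun_sum fun (i : Fin N) (_ : i ∈ Finset.univ) =>
      (hθ t ht0 i).const_mul (ω i)
    have h2 := ((hθ.ordR_deriv ht0).pow 2).const_mul (κ * N / 2)
    refine (h1.add h2).congr_deriv ?_
    have h3 : ∀ i, vf ω κ (θ t) i ^ 2 = ω i * vf ω κ (θ t) i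
        + κ * ordR (θ t) * (-Real.sin (θ t i) * vf ω κ (θ t) i) := fun i => by
      have : vf ω κ (θ t) i = ω i - κ * ordR (θ t) * Real.sin (θ t i) := rfl
      linear_combination vf ω κ (θ t) i * this
    simp only [h3, Finset.sum_add_distrib, ← Finset.mul_sum]
    field_simp
    simp
    ring
  have hsum : Tendsto (fun t => ∑ i, vf ω κ (θ t) i ^ 2) atTop (nhds 0) := by
    refine barbalat (K := N * (3 * κ * (3 * κ) * (6 * κ))) hderiv
      (fun t _ => Finset.sum_nonneg fun i _ => sq_nonneg _) (by positivity) ?_ ?_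
    · intro s t hs ht
      rw [← Finset.sum_sub_distrib]
      calc |∑ i, (vf ω κ (θ t) i ^ 2 - vf ω κ (θ s) i ^ 2)|
          ≤ ∑ i, |vf ω κ (θ t) i ^ 2 - vf ω κ (θ s) i ^ 2| := Finset.abs_sum_le_sum_abs _ _
        _ ≤ ∑ _i : Fin N, 3 * κ * (3 * κ * |t - s|) * (6 * κ) := by
            refine Finset.sum_le_sum fun i _ => ?_
            rw [sq_sub_sq, mul_comm, abs_mul]
            have h1 := (vf_lip (ω := ω) hκ (θ t) (θ s) i).trans (mul_le_mul_of_nonneg_left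
              (hθ.norm_sub_le hκ hω (hT.trans hs) (hT.trans ht)) (by positivity))
            have h2 : |vf ω κ (θ t) i + vf ω κ (θ s) i| ≤ 6 * κ := (abs_add_le _ _).trans
              (by linarith [vf_bound hκ hω (θ t) i, vf_bound hκ hω (θ s) i])
            gcongr
        _ = _ := by simp; ring
    · intro htend
      obtain ⟨t, h1, ht⟩ := ((htend.eventually_gt_atTop
        (∑ i, |ω i| * B i + κ * N / 2 * 2 ^ 2)).and (eventually_ge_atTop T)).exists
      refine absurd h1 (not_lt.2 ?_)
      have h2 : ∑ i, ω i * θ t i ≤ ∑ i, |ω i| * B i := Finset.sum_le_sum fun i _ => by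
        refine (le_abs_self _).trans ?_
        rw [abs_mul]
        exact mul_le_mul_of_nonneg_left (hB i t ht) (abs_nonneg _)
      have h3 : κ * N / 2 * ordR (θ t) ^ 2 ≤ κ * N / 2 * 2 ^ 2 := by
        gcongr
        · exact ordR_nonneg _
        · exact ordR_le_two _
      linarith
  have hsq : Tendsto (fun t => vf ω κ (θ t) i ^ 2) atTop (nhds 0) :=
    squeeze_zero (fun t => sq_nonneg _)
      (fun t => Finset.single_le_sum (f := fun i => vf ω κ (θ t) i ^ 2)
        (fun i _ => sq_nonneg _) (Finset.mem_univ i)) hsum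
  have := hsq.sqrt
  simp only [Real.sqrt_sq_eq_abs, Real.sqrt_zero] at this
  exact (tendsto_zero_iff_abs_tendsto_zero _).2 this

/-! ### Convergence -/

/-- If `sin (θᵢ)` stays away from `±1`, then `cos (θᵢ)` eventually has constant sign. -/
lemma Sol.cos_sign (hθ : Sol ω κ θ) {ρ : ℝ} (hρ : ρ < 1) (i : Fin N)
    (h : ∀ᶠ t in atTop, |Real.sin (θ t i)| ≤ ρ) :
    ∃ σ : ℝ, σ ≤ 1 ∧ ∀ᶠ t in atTop, Real.cos (θ t i) = σ * √(1 - Real.sin (θ t i) ^ 2) := by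
  obtain ⟨T, hT⟩ := eventually_atTop.1 (h.and (eventually_ge_atTop 0))
  have hlt : ∀ t, T ≤ t → 0 < 1 - Real.sin (θ t i) ^ 2 := fun t ht => by
    have h1 := (hT t ht).1
    rw [← sq_abs]
    nlinarith [abs_nonneg (Real.sin (θ t i))]
  have hcs : ContinuousOn (fun t => Real.sin (θ t i)) (Set.Ici T) := fun t ht =>
    (hθ.sin_deriv (hT t ht).2 i).continuousAt.continuousWithinAt
  have hcc : ContinuousOn (fun t => Real.cos (θ t i)) (Set.Ici T) := fun t ht =>
    (hθ.cos_deriv (hT t ht).2 i).continuousAt.continuousWithinAt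
  have hcq : ContinuousOn (fun t => √(1 - Real.sin (θ t i) ^ 2)) (Set.Ici T) :=
    (continuousOn_const.sub (hcs.pow 2)).sqrt
  have := isPreconnected_Ici.eq_or_eq_neg_of_sq_eq hcc hcq
    (fun t ht => by
      simp only [Pi.pow_apply]
      rw [Real.sq_sqrt (hlt t ht).le, Real.cos_sq'])
    (fun {t} ht => (Real.sqrt_pos.2 (hlt t ht)).ne')
  rcases this with h1 | h1
  · exact ⟨1, le_rfl, eventually_atTop.2 ⟨T, fun t ht => by simpa using h1 ht⟩⟩
  · exact ⟨-1, by norm_num, eventually_atTop.2 ⟨T, fun t ht => by simpa using h1 ht⟩⟩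

/-- The self-consistency equation for the order parameter at an equilibrium does not hold on an
interval: it is analytic and fails for large `y`, because its right-hand side is at most `2`. -/
lemma not_identity (ω : Fin N → ℝ) {κ Ωn : ℝ} (hκ : 0 < κ) (hΩ : 0 ≤ Ωn)
    (hω : ∀ i, |ω i| ≤ Ωn) (σ : Fin N → ℝ) (hσ : ∀ i, σ i ≤ 1) {a b : ℝ} (hab : a < b)
    (ha : Ωn < κ * a) :
    ∃ y ∈ Set.Ioo a b, y ≠ (N : ℝ)⁻¹ * ∑ i, (1 + σ i * √(1 - (ω i / (κ * y)) ^ 2)) := by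
  by_contra! h
  have hpos : ∀ y ∈ Set.Ioi (Ωn / κ), ∀ i, 0 < y ∧ 0 < 1 - (ω i / (κ * y)) ^ 2 := by
    intro y hy i
    have hy' : Ωn < y * κ := (div_lt_iff₀ hκ).1 hy
    have hy0 : 0 < y := lt_of_le_of_lt (by positivity) hy
    refine ⟨hy0, ?_⟩
    have h1 : |ω i / (κ * y)| < 1 := by
      rw [abs_div, abs_of_pos (by positivity : 0 < κ * y), div_lt_one (by positivity)]
      linarith [hω i]
    have := (sq_lt_one_iff_abs_lt_one _).2 h1
    linarith
  have han : AnalyticOnNhd ℝ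
      (fun y : ℝ => (N : ℝ)⁻¹ * ∑ i, (1 + σ i * √(1 - (ω i / (κ * y)) ^ 2)))
      (Set.Ioi (Ωn / κ)) := by
    intro y hy
    refine analyticAt_const.mul ?_
    refine Finset.analyticAt_fun_sum _ fun i _ => ?_
    refine analyticAt_const.add (analyticAt_const.mul ?_)
    obtain ⟨hy0, h1⟩ := hpos y hy i
    have h2 : AnalyticAt ℝ (fun y : ℝ => 1 - (ω i / (κ * y)) ^ 2) y :=
      analyticAt_const.sub ((analyticAt_const.div (analyticAt_const.mul analyticAt_id)
        (mul_pos hκ hy0).ne').pow 2)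
    exact AnalyticAt.fun_comp (g := fun x => √x)
      (ContDiffAt.analyticAt (Real.contDiffAt_sqrt h1.ne')) h2
  have hm : (a + b) / 2 ∈ Set.Ioo a b := ⟨by linarith, by linarith⟩
  have hz : (a + b) / 2 ∈ Set.Ioi (Ωn / κ) := by
    refine lt_trans ?_ hm.1
    rw [div_lt_iff₀ hκ]; linarith
  have hEq := AnalyticOnNhd.eqOn_of_preconnected_of_eventuallyEq
    (fun y _ => analyticAt_id (𝕜 := ℝ) (z := y)) han isPreconnected_Ioi hz
    (Filter.eventually_of_mem (Ioo_mem_nhds hm.1 hm.2) h)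
  have hbig : Ωn / κ + 3 ∈ Set.Ioi (Ωn / κ) := by simp
  have h1 : Ωn / κ + 3 = (N : ℝ)⁻¹ * ∑ i,
    (1 + σ i * √(1 - (ω i / (κ * (Ωn / κ + 3))) ^ 2)) := hEq hbig
  have h2 : (N : ℝ)⁻¹ * ∑ i, (1 + σ i * √(1 - (ω i / (κ * (Ωn / κ + 3))) ^ 2)) ≤ 2 := by
    refine inv_mul_sum_le _ (by norm_num) fun i => ?_
    have h3 : √(1 - (ω i / (κ * (Ωn / κ + 3))) ^ 2) ≤ 1 := by
      exact Real.sqrt_le_iff.2 ⟨by norm_num, by linarith [sq_nonneg (ω i / (κ * (Ωn / κ + 3)))]⟩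
    have h4 := Real.sqrt_nonneg (1 - (ω i / (κ * (Ωn / κ + 3))) ^ 2)
    nlinarith [hσ i]
  have : 0 ≤ Ωn / κ := by positivity
  linarith

/-- If all velocities tend to zero and the order parameter is eventually large enough, then it
converges. -/
lemma Sol.ordR_converges (hκ : 0 < κ) {Ωn r T : ℝ} (hΩ : 0 ≤ Ωn)
    (hω : ∀ i, |ω i| ≤ Ωn) (hr : Ωn < κ * r) (hθ : Sol ω κ θ) (hT : 0 ≤ T)
    (hR : ∀ t, T ≤ t → r ≤ ordR (θ t))
    (hv : ∀ i, Tendsto (fun t => vf ω κ (θ t) i) atTop (nhds 0)) :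
    ∃ c, Tendsto (fun t => ordR (θ t)) atTop (nhds c) := by
  have hr0 : 0 < r := by
    by_contra! h
    nlinarith
  have hRpos : ∀ t, T ≤ t → 0 < ordR (θ t) := fun t ht => hr0.trans_le (hR t ht)
  have hs : ∀ i, Tendsto (fun t => vf ω κ (θ t) i / (κ * ordR (θ t))) atTop (nhds 0) := by
    intro i
    have h1 : Tendsto (fun t => |vf ω κ (θ t) i| / (κ * r)) atTop (nhds 0) := by
      simpa using ((hv i).abs).div_const (κ * r)
    refine squeeze_zero_norm' ?_ h1
    filter_upwards [eventually_ge_atTop T] with t ht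
    have := hRpos t ht
    rw [norm_div, Real.norm_eq_abs, Real.norm_eq_abs,
      abs_of_pos (by positivity : 0 < κ * ordR (θ t))]
    gcongr
    exact hR t ht
  have hsin : ∀ i t, T ≤ t → Real.sin (θ t i)
      = ω i / (κ * ordR (θ t)) - vf ω κ (θ t) i / (κ * ordR (θ t)) := by
    intro i t ht
    have := hRpos t ht
    simp only [vf]
    field_simp
    ring
  have hsmall : ∀ i, ∀ᶠ t in atTop, |Real.sin (θ t i)| ≤ (1 + Ωn / (κ * r)) / 2 := by
    intro i
    have hρ : Ωn / (κ * r) < 1 := by rw [div_lt_one (by positivity)]; exact hr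
    have h1 := ((hs i).abs).eventually (gt_mem_nhds
      (show |(0 : ℝ)| < (1 - Ωn / (κ * r)) / 2 by rw [abs_zero]; linarith))
    filter_upwards [h1, eventually_ge_atTop T] with t h2 ht
    have := hRpos t ht
    have h3 : |ω i / (κ * ordR (θ t))| ≤ Ωn / (κ * r) := by
      rw [abs_div, abs_of_pos (by positivity : 0 < κ * ordR (θ t))]
      gcongr
      · exact hω i
      · exact hR t ht
    rw [hsin i t ht]
    refine (abs_sub _ _).trans ?_
    linarith
  have hρ1 : (1 + Ωn / (κ * r)) / 2 < 1 := by
    have : Ωn / (κ * r) < 1 := by rw [div_lt_one (by positivity)]; exact hr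
    linarith
  choose σ hσ1 hσ using fun i => hθ.cos_sign hρ1 i (hsmall i)
  refine exists_lim (B := 2) (hθ.continuousOn_ordR hT) (fun t _ => ?_) fun a b hab => ?_
  · rw [abs_of_nonneg (ordR_nonneg _)]; exact ordR_le_two _
  by_contra! hcon
  -- A value attained at arbitrarily late times solves the limiting self-consistency equation.
  have hkey : ∀ y ∈ Set.Ioo a b, r ≤ y ∧
      y = (N : ℝ)⁻¹ * ∑ i, (1 + σ i * √(1 - (ω i / (κ * y)) ^ 2)) := by
    intro y hy
    have hfr := hcon y hy
    have hry : r ≤ y := by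
      obtain ⟨t, rfl, ht⟩ := (hfr.and_eventually (eventually_ge_atTop T)).exists
      exact hR t ht
    refine ⟨hry, ?_⟩
    have hne : (atTop ⊓ 𝓟 {t | ordR (θ t) = y}).NeBot := frequently_mem_iff_neBot.1 hfr
    have hmem : ∀ᶠ t in atTop ⊓ 𝓟 {t | ordR (θ t) = y}, ordR (θ t) = y :=
      mem_inf_of_right (mem_principal_self _)
    have hsl : ∀ i, Tendsto (fun t => Real.sin (θ t i)) (atTop ⊓ 𝓟 {t | ordR (θ t) = y})
        (nhds (ω i / (κ * y))) := by
      intro i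
      have h1 : Tendsto (fun t => ω i / (κ * y) - vf ω κ (θ t) i / (κ * ordR (θ t)))
          (atTop ⊓ 𝓟 {t | ordR (θ t) = y}) (nhds (ω i / (κ * y))) := by
        simpa using ((hs i).mono_left inf_le_left).const_sub (ω i / (κ * y))
      refine h1.congr' ?_
      filter_upwards [hmem, (eventually_ge_atTop T).filter_mono inf_le_left] with t h2 ht
      rw [hsin i t ht, h2]
    have h2 : Tendsto (fun t => (N : ℝ)⁻¹ * ∑ i, (1 + σ i * √(1 - Real.sin (θ t i) ^ 2)))
        (atTop ⊓ 𝓟 {t | ordR (θ t) = y})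
        (nhds ((N : ℝ)⁻¹ * ∑ i, (1 + σ i * √(1 - (ω i / (κ * y)) ^ 2)))) :=
      (tendsto_finsetSum _ fun i _ =>
        ((((hsl i).pow 2).const_sub 1).sqrt.const_mul (σ i)).const_add 1).const_mul _
    refine tendsto_nhds_unique (tendsto_const_nhds.congr' ?_) h2
    filter_upwards [hmem, (eventually_all.2 hσ).filter_mono inf_le_left] with t h3 h4
    rw [← h3, ordR]
    simp only [h4]
  have ha : Ωn < κ * ((a + b) / 2) :=
    hr.trans_le (by gcongr; exact (hkey ((a + b) / 2) ⟨by linarith, by linarith⟩).1)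
  obtain ⟨y, hy, hne⟩ := not_identity ω hκ hΩ hω σ hσ1 (show (a + b) / 2 < b by linarith) ha
  exact hne (hkey y ⟨by linarith [hy.1], hy.2⟩).2

/-- If the order parameter is eventually large enough, then every oscillator converges. -/
lemma Sol.locked (hN : 1 ≤ N) (hκ : 0 < κ) {Ωn r T : ℝ} (hΩ : 0 ≤ Ωn) (hΩκ : Ωn ≤ κ)
    (hω : ∀ i, |ω i| ≤ Ωn) (hr : Ωn < κ * r) (hθ : Sol ω κ θ) (hT : 0 ≤ T)
    (hR : ∀ t, T ≤ t → r ≤ ordR (θ t)) :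
    (∃ c, r ≤ c ∧ Tendsto (fun t => ordR (θ t)) atTop (nhds c)) ∧
      ∀ i, (∃ L, Tendsto (fun t => θ t i) atTop (nhds L)) ∧
        Tendsto (fun t => vf ω κ (θ t) i) atTop (nhds 0) := by
  have hb := fun i => hθ.bounded hκ hω hr hT hR i
  have hv := fun i => hθ.vf_tendsto hN hκ (fun i => (hω i).trans hΩκ) hT hb i
  obtain ⟨c, hc⟩ := hθ.ordR_converges hκ hΩ hω hr hT hR hv
  have hrc : r ≤ c := ge_of_tendsto hc ((eventually_ge_atTop T).mono hR)
  refine ⟨⟨c, hrc, hc⟩, fun i => ⟨?_, hv i⟩⟩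
  have hκc : κ * c ≠ 0 := by
    have : κ * r ≤ κ * c := by gcongr
    linarith
  have hsl : Tendsto (fun t => Real.sin (θ t i)) atTop (nhds (ω i / (κ * c))) := by
    have h1 : Tendsto (fun t => (ω i - vf ω κ (θ t) i) / (κ * ordR (θ t))) atTop
        (nhds ((ω i - 0) / (κ * c))) := ((hv i).const_sub (ω i)).div (hc.const_mul κ) hκc
    rw [sub_zero] at h1
    refine h1.congr' ?_
    filter_upwards [eventually_ge_atTop T] with t ht
    have : κ * ordR (θ t) ≠ 0 := by
      have : κ * r ≤ κ * ordR (θ t) := by gcongr; exact hR t ht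
      linarith
    simp only [vf]
    rw [sub_sub_cancel, mul_div_cancel_left₀ _ this]
  obtain ⟨B, hB⟩ := hb i
  refine exists_lim (fun t ht => (hθ t (hT.trans ht) i).continuousAt.continuousWithinAt) hB
    fun a b hab => ?_
  obtain ⟨y, hy, hne⟩ := exists_sin_ne hab (ω i / (κ * c))
  exact ⟨y, hy, fun hfr => hne (eq_of_frequently (Eventually.of_forall fun _ => rfl) hsl hfr)⟩

/-- There is a primitive of `growth` along a solution. -/
lemma Sol.exists_primitive (hθ : Sol ω κ θ) :
    ∃ W : ℝ → ℝ, (∀ t, 0 ≤ t → HasDerivAt W (growth κ (θ t)) t) ∧ W 0 = 0 := by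
  have hc : Continuous fun t => growth κ (θ (max t 0)) := by
    have h1 : Continuous fun t : ℝ => ordR (θ (max t 0)) :=
      (hθ.continuousOn_ordR le_rfl).comp_continuous (f := fun t => max t 0)
        (continuous_id.max continuous_const) fun t => le_max_right t 0
    unfold growth
    fun_prop
  refine ⟨fun t => ∫ s in (0 : ℝ)..t, growth κ (θ (max s 0)), fun t ht => ?_, by simp⟩
  have := (hc.integral_hasStrictDerivAt 0 t).hasDerivAt
  rwa [max_eq_left ht] at this

/-- If the order parameter stays below `1`, is not eventually at least `r`, and `growth` has
finite integral, then the order parameter vanishes initially. -/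
lemma Sol.ordR_zero (hN : 1 ≤ N) (hκ : 0 < κ) {r : ℝ} (hr : r < 1)
    (hω : ∀ i, |ω i| ≤ κ) (hθ : Sol ω κ θ)
    (hR : ¬ ∃ T, 0 ≤ T ∧ ∀ t, T ≤ t → r ≤ ordR (θ t)) (hR1 : ∀ t, 0 ≤ t → ordR (θ t) < 1)
    {W : ℝ → ℝ} (hW : ∀ t, 0 ≤ t → HasDerivAt W (growth κ (θ t)) t)
    (hnot : ¬ Tendsto W atTop atTop) : ordR (θ 0) = 0 := by
  have hN' : (0 : ℝ) < N := by exact_mod_cast hN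
  have hg : Tendsto (fun t => growth κ (θ t)) atTop (nhds 0) := by
    refine barbalat (K := 3 * κ * N * (3 * κ)) hW (fun t ht => ?_) (by positivity) ?_ hnot
    · exact mul_nonneg (by positivity)
        (mul_nonneg (ordR_nonneg _) (by linarith [hR1 t ht]))
    · intro s t hs ht
      refine (growth_lip hκ _ _).trans ?_
      rw [mul_assoc (3 * κ * N)]
      gcongr
      exact hθ.norm_sub_le hκ hω hs ht
  have hRR : Tendsto (fun t => ordR (θ t) * (1 - ordR (θ t))) atTop (nhds 0) := by
    have := hg.div_const (κ * N)
    simp only [zero_div] at this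
    refine this.congr fun t => ?_
    simp only [growth]
    field_simp
  obtain ⟨c, hc⟩ : ∃ c, Tendsto (fun t => ordR (θ t)) atTop (nhds c) := by
    refine exists_lim (B := 2) (hθ.continuousOn_ordR le_rfl) (fun t _ => ?_) fun a b hab => ?_
    · rw [abs_of_nonneg (ordR_nonneg _)]; exact ordR_le_two _
    by_contra! hcon
    have hz : ∀ y ∈ Set.Ioo a b, y = 0 ∨ y = 1 := fun y hy => by
      have : y * (1 - y) = 0 := eq_of_frequently (g := fun y => y * (1 - y))
        (Eventually.of_forall fun _ => rfl) hRR (hcon y hy)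
      rcases mul_eq_zero.1 this with h | h
      · exact Or.inl h
      · exact Or.inr (by linarith)
    have h1 := hz ((a + b) / 2) ⟨by linarith, by linarith⟩
    have h2 := hz ((2 * a + b) / 3) ⟨by linarith, by linarith⟩
    have h3 := hz ((a + 2 * b) / 3) ⟨by linarith, by linarith⟩
    rcases h1 with h1 | h1 <;> rcases h2 with h2 | h2 <;> rcases h3 with h3 | h3 <;> linarith
  have hc0 : c = 0 := by
    have h1 : c * (1 - c) = 0 := tendsto_nhds_unique (hc.mul (hc.const_sub 1)) hRR
    rcases mul_eq_zero.1 h1 with h | h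
    · exact h
    · exfalso
      have hc1 : c = 1 := by linarith
      obtain ⟨T, hT⟩ := eventually_atTop.1
        ((hc.eventually (lt_mem_nhds (hc1 ▸ hr))).and (eventually_ge_atTop 0))
      exact hR ⟨T, (hT T le_rfl).2, fun t ht => (hT t ht).1.le⟩
  rw [hc0] at hc
  have hcos : ∀ i, Tendsto (fun t => Real.cos (θ t i)) atTop (nhds (-1)) := by
    intro i
    have h1 : Tendsto (fun t => N * ordR (θ t)) atTop (nhds 0) := by
      simpa using hc.const_mul (N : ℝ)
    have h2 : Tendsto (fun t => 1 + Real.cos (θ t i)) atTop (nhds 0) := by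
      refine squeeze_zero (fun t => by linarith [Real.neg_one_le_cos (θ t i)]) (fun t => ?_) h1
      have : (N : ℝ) * ordR (θ t) = ∑ j, (1 + Real.cos (θ t j)) := by
        simp only [ordR]; field_simp
      rw [this]
      exact Finset.single_le_sum (f := fun j => 1 + Real.cos (θ t j))
        (fun j _ => by linarith [Real.neg_one_le_cos (θ t j)]) (Finset.mem_univ i)
    simpa using h2.sub_const 1
  have hsin : ∀ i, Tendsto (fun t => Real.sin (θ t i)) atTop (nhds 0) := by
    intro i
    have h1 := (((hcos i).pow 2).const_sub 1).sqrt
    simp only [even_two, Even.neg_pow, one_pow, sub_self, Real.sqrt_zero] at h1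
    refine (tendsto_zero_iff_abs_tendsto_zero _).2 (h1.congr fun t => ?_)
    rw [← Real.sin_sq, Real.sqrt_sq_eq_abs]; rfl
  have hω0 : ∀ i, ω i = 0 := by
    intro i
    have h1 : Tendsto (fun t => vf ω κ (θ t) i) atTop (nhds (ω i - κ * 0 * 0)) :=
      ((hc.const_mul κ).mul (hsin i)).const_sub (ω i)
    have h2 := eq_zero_of_tendsto_deriv (fun t ht => hθ.sin_deriv ht i) (hsin i)
      ((hcos i).mul h1)
    linarith
  have hmono : MonotoneOn (fun t => ordR (θ t)) (Set.Ici 0) := by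
    refine monotoneOn_of_deriv_nonneg (convex_Ici 0) (hθ.continuousOn_ordR le_rfl)
      (fun t ht => (hθ.ordR_deriv (interior_subset ht)).differentiableAt.differentiableWithinAt)
      (fun t ht => ?_)
    rw [(hθ.ordR_deriv (interior_subset ht)).deriv]
    refine mul_nonneg (by positivity) (Finset.sum_nonneg fun i _ => ?_)
    have h1 : -Real.sin (θ t i) * vf ω κ (θ t) i = κ * ordR (θ t) * Real.sin (θ t i) ^ 2 := by
      simp only [vf, hω0]; ring
    rw [h1]
    have := ordR_nonneg (θ t)
    positivity
  refine le_antisymm ?_ (ordR_nonneg _)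
  exact ge_of_tendsto hc ((eventually_ge_atTop 0).mono fun t ht => hmono Set.self_mem_Ici ht ht)

/-- The dichotomy for a single trajectory whose accumulated `growth` does not diverge. -/
lemma Sol.main (hN : 1 ≤ N) {Ωn : ℝ} (hΩ : 0 ≤ Ωn) (hκ2 : 2 * Ωn < κ) (hω : ∀ i, |ω i| ≤ Ωn)
    (hθ : Sol ω κ θ) (h0 : ordR (θ 0) ≠ 0)
    (hnot : ∀ W : ℝ → ℝ, (∀ t, 0 ≤ t → HasDerivAt W (growth κ (θ t)) t) → W 0 = 0 →
        ¬ Tendsto W atTop atTop) :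
    (∃ c, 1 ≤ c ∧ Tendsto (fun t => ordR (θ t)) atTop (nhds c)) ∧
      ∀ i, (∃ L, Tendsto (fun t => θ t i) atTop (nhds L)) ∧
        Tendsto (fun t => vf ω κ (θ t) i) atTop (nhds 0) := by
  have hκ : 0 < κ := by linarith
  have hN' : (0 : ℝ) < N := by exact_mod_cast hN
  obtain ⟨W, hW, hW0⟩ := hθ.exists_primitive
  have hW1 := hnot W hW hW0
  -- The thresholds are `r² = 1/2` and `q² = 3/4 - (Ωn/κ)²`, for which `r < q` and
  -- `(Ωn/κ)² < r² (1 - q²)` both amount to `Ωn/κ < 1/2`.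
  have hx : (Ωn / κ) ^ 2 < 1 / 4 := by
    have h1 : Ωn / κ < 1 / 2 := by rw [div_lt_iff₀ hκ]; linarith
    have h2 : 0 ≤ Ωn / κ := by positivity
    nlinarith
  set r := √(1 / 2) with hrdef
  set q := √(3 / 4 - (Ωn / κ) ^ 2) with hqdef
  have hr0 : 0 < r := Real.sqrt_pos.2 (by norm_num)
  have hr2 : r ^ 2 = 1 / 2 := Real.sq_sqrt (by norm_num)
  have hq2 : q ^ 2 = 3 / 4 - (Ωn / κ) ^ 2 := Real.sq_sqrt (by linarith)
  have hrq' : r < q := Real.sqrt_lt_sqrt (by norm_num) (by linarith)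
  have hq1 : q < 1 := by nlinarith [sq_nonneg (Ωn / κ)]
  have hrq : Ωn ^ 2 < κ ^ 2 * r ^ 2 * (1 - q ^ 2) := by
    have h1 : Ωn ^ 2 = κ ^ 2 * (Ωn / κ) ^ 2 := by field_simp
    rw [h1, hr2, hq2, mul_assoc]
    refine mul_lt_mul_of_pos_left ?_ (by positivity)
    linarith
  have hrκ : Ωn < κ * r := by
    have : 1 / 2 < r := by nlinarith
    nlinarith
  by_cases hR : ∃ T, 0 ≤ T ∧ ∀ t, T ≤ t → r ≤ ordR (θ t)
  · obtain ⟨T, hT, hRT⟩ := hR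
    obtain ⟨⟨c, hrc, hc⟩, hi⟩ := hθ.locked hN hκ hΩ (by linarith) hω hrκ hT hRT
    refine ⟨⟨c, ?_, hc⟩, hi⟩
    by_contra! hc1
    -- A limit below `1` would make `growth` eventually bounded below by a positive constant.
    apply hW1
    have hg : Tendsto (fun t => growth κ (θ t)) atTop (nhds (κ * N * (c * (1 - c)))) :=
      (hc.mul (hc.const_sub 1)).const_mul _
    have hpos : 0 < κ * N * (c * (1 - c)) := by
      have : 0 < c := hr0.trans_le hrc
      have : 0 < 1 - c := by linarith
      positivity
    set ε := κ * N * (c * (1 - c)) / 2 with hε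
    obtain ⟨S, hS⟩ := eventually_atTop.1
      ((hg.eventually (lt_mem_nhds (show ε < _ by rw [hε]; linarith))).and
        (eventually_ge_atTop 0))
    have hlin : ∀ t, S ≤ t → ε * (t - S) ≤ W t - W S := fun t ht =>
      (convex_Ici S).mul_sub_le_image_sub_of_le_deriv
        (fun s hs => (hW s (hS s hs).2).continuousAt.continuousWithinAt)
        (fun s hs => (hW s (hS s (interior_subset hs)).2).differentiableAt.differentiableWithinAt)
        (fun s hs => by
          rw [(hW s (hS s (interior_subset hs)).2).deriv]
          exact (hS s (interior_subset hs)).1.le) S Set.self_mem_Ici t ht ht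
    have hε0 : 0 < ε := by rw [hε]; linarith
    refine tendsto_atTop_mono' (f₁ := fun t => ε * (t - S) + W S) _ ?_ ?_
    · filter_upwards [eventually_ge_atTop S] with t ht
      linarith [hlin t ht]
    · exact tendsto_atTop_add_const_right _ _
        ((tendsto_atTop_add_const_right _ (-S) tendsto_id).const_mul_atTop hε0)
  · have hR1 : ∀ t, 0 ≤ t → ordR (θ t) < 1 := by
      intro t ht
      by_contra! h1
      exact hR ⟨t, ht, fun s hs =>
        (hθ.ordR_trap hN hκ hω hr0 hrq' hq1 hrq ht h1 s hs).le⟩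
    exact absurd (hθ.ordR_zero hN hκ (hrq'.trans hq1) (fun i => (hω i).trans (by linarith)) hR hR1
      hW hW1) h0

end Dynamics

/-- `R = 0` requires `cos θ₀ = -1`, which fails almost surely. -/
lemma ae_ordR_ne (hN : 1 ≤ N) : ∀ᵐ x : Fin N → ℝ, ordR x ≠ 0 := by
  have hcount : {y : ℝ | Real.cos y = -1}.Countable := by
    refine (Set.countable_range fun n : ℤ => Real.pi + n * (2 * Real.pi)).mono ?_
    intro y hy
    obtain ⟨n, hn⟩ := Real.cos_eq_neg_one_iff.1 hy
    exact ⟨n, hn⟩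
  have h1 : ∀ᵐ y : ℝ, Real.cos y ≠ -1 := by
    rw [ae_iff]; simpa using hcount.measure_zero volume
  have h2 := (Measure.quasiMeasurePreserving_eval (fun _ : Fin N => (volume : Measure ℝ))
    ⟨0, hN⟩).ae h1
  filter_upwards [h2] with x hx h0
  apply hx
  have hN' : (0 : ℝ) < N := by exact_mod_cast hN
  have h3 : ∑ j, (1 + Real.cos (x j)) = 0 :=
    (mul_eq_zero.1 h0).resolve_left (inv_ne_zero hN'.ne')
  have h4 := (Finset.sum_eq_zero_iff_of_nonneg fun j _ => by
    linarith [Real.neg_one_le_cos (x j)]).1 h3 ⟨0, hN⟩ (Finset.mem_univ _)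
  change Real.cos (x ⟨0, hN⟩) = -1
  linarith

end Winfree

theorem stmt0 (N : ℕ) (hN : 1 ≤ N) (ω : Fin N → ℝ) (κ : ℝ) (Ωn : ℝ)
    (hΩn : IsGreatest (Set.range fun i => |ω i|) Ωn)
    (hκ : 2 * Ωn < κ) :
    ∀ᵐ θ0 : Fin N → ℝ ∂volume,
      ∀ θ : Fin N → ℝ → ℝ, IsWinfreeSol N ω κ θ0 θ →
        (∀ i, (∃ L : ℝ, Tendsto (θ i) atTop (nhds L)) ∧
          Tendsto (deriv (θ i)) atTop (nhds 0)) ∧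
        (∃ Rinf : ℝ, Tendsto (orderParam N θ) atTop (nhds Rinf) ∧
          Real.sqrt (1/2 + Real.sqrt (1/4 - Ωn^2 / κ^2)) ≤ Rinf) := by
  have hω : ∀ i, |ω i| ≤ Ωn := fun i => hΩn.2 ⟨i, rfl⟩
  have hΩ : 0 ≤ Ωn := (abs_nonneg _).trans (hω ⟨0, hN⟩)
  filter_upwards [Winfree.ae_not_tendsto hN (ω := ω) (κ := κ) (by linarith)
    (fun i => (hω i).trans (by linarith)), Winfree.ae_ordR_ne hN] with x hx hx0 θ hθ
  have hsol : Winfree.Sol ω κ (fun t i => θ i t) := fun t ht i => by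
    refine (hθ.2 i t ht).congr_deriv ?_
    simp only [Winfree.vf, Winfree.ordR]
    ring
  have hinit : (fun i => θ i 0) = x := funext hθ.1
  obtain ⟨⟨c, hc1, hc⟩, hi⟩ := hsol.main hN hΩ hκ hω (by simpa only [hinit] using hx0)
    (hx _ hinit hsol)
  refine ⟨fun i => ⟨(hi i).1, (hi i).2.congr' ?_⟩, c, hc, ?_⟩
  · filter_upwards [eventually_ge_atTop 0] with t ht
    exact (hsol t ht i).deriv.symm
  · -- The claimed lower bound never exceeds `1`.
    have h1 : √(1 / 4 - Ωn ^ 2 / κ ^ 2) ≤ 1 / 2 := by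
      rw [Real.sqrt_le_left (by norm_num)]
      have : 0 ≤ Ωn ^ 2 / κ ^ 2 := by positivity
      linarith
    refine le_trans ?_ hc1
    exact Real.sqrt_le_iff.2 ⟨by norm_num, by linarith⟩
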